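/- arXiv:1302.4151 — 2 statements merged into one kernel-verified Lean document; each statement's English description precedes it below -/
import Mathlib

section
/- Let φ : (R,m) → (S,n) be a flat local homomorphism of commutative Noetherian local rings such that the induced map R/m → S/mS is an isomorphism, and let M and N be finitely generated R-modules. Assume Ext^i_R(M,N) = 0 for all i ≥ 1. If for each i with 1 ≤ i ≤ dim_R(N) the R-module Ext^i_R(S ⊗_R M, N) belongs to NAK(R) (i.e., it is either zero or satisfies m·Ext^i_R(S ⊗_R M, N) ≠ Ext^i_R(S ⊗_R M, N)), then Ext^i_R(S ⊗_R M, N) = 0 for all i ≥ 1. -/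
universe u

open CategoryTheory TensorProduct

/-- `Ext^i_R(M, N)` as an object of `ModuleCat R`. -/
noncomputable def extModule (R : Type u) [CommRing R] (M N : Type u) [AddCommGroup M]
    [Module R M] [AddCommGroup N] [Module R N] (i : ℕ) : ModuleCat.{u} R :=
  ((Ext R (ModuleCat.{u} R) i).obj (Opposite.op (ModuleCat.of R M))).obj (ModuleCat.of R N)


section Bridge

theorem extMk_smul_aux {R : Type u} [CommRing R] {X Y : ModuleCat.{u} R}
    (P : ProjectiveResolution X) (n : ℕ) (r : R) (f : P.complex.X n ⟶ Y)
    (h : P.complex.d (n + 1) n ≫ f = 0) (h' : P.complex.d (n + 1) n ≫ (r • f) = 0) :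
    P.extMk (r • f) (n + 1) rfl h' = r • P.extMk f (n + 1) rfl h := by
  rw [Abelian.Ext.smul_eq_comp_mk₀, P.extMk_comp_mk₀]
  congr 1

/-- `Hom`-cocycles give classes in `Abelian.Ext`, linearly. -/
noncomputable def extMkLin {R : Type u} [CommRing R] {X Y : ModuleCat.{u} R}
    (P : ProjectiveResolution X) (n : ℕ) :
    LinearMap.ker ((P.complex.linearYonedaObj R Y).d n (n + 1)).hom →ₗ[R] Abelian.Ext X Y n where
  toFun f := P.extMk (f.1 : P.complex.X n ⟶ Y) (n + 1) rfl (by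
    have h := f.2
    rw [LinearMap.mem_ker] at h
    simp only [ChainComplex.linearYonedaObj_d] at h
    exact h)
  map_add' f g := (P.add_extMk (f.1 : P.complex.X n ⟶ Y) (g.1 : P.complex.X n ⟶ Y) (n + 1) rfl
    _ _).symm
  map_smul' r f := extMk_smul_aux P n r (f.1 : P.complex.X n ⟶ Y) _ _

theorem bridge (R : Type u) [CommRing R] (X Y : ModuleCat.{u} R) (i : ℕ) :
    Nonempty (((Ext R (ModuleCat.{u} R) (i + 1)).obj (Opposite.op X)).obj Y ≃ₗ[R]
      Abelian.Ext X Y (i + 1)) := by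
  let P := ProjectiveResolution.of X
  let K := P.complex.linearYonedaObj R Y
  let S := K.sc' i (i + 1) (i + 2)
  have e1 := (P.isoExt (R := R) (i + 1) Y)
  have e2 : K.homology (i + 1) ≅ S.homology :=
    ShortComplex.homologyMapIso (K.isoSc' i (i + 1) (i + 2) (by simp) (by simp))
  have e3 := S.moduleCatHomologyIso
  let φ : LinearMap.ker S.g.hom →ₗ[R] Abelian.Ext X Y (i + 1) := extMkLin P (i + 1)
  have hs : Function.Surjective φ := fun α => by
    obtain ⟨f, hf, rfl⟩ := P.extMk_surjective α (i + 2) rfl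
    refine ⟨⟨f, ?_⟩, rfl⟩
    exact hf
  have hk : LinearMap.ker φ = LinearMap.range S.moduleCatToCycles := by
    ext f
    rw [LinearMap.mem_ker, LinearMap.mem_range]
    refine (P.extMk_eq_zero_iff (f.1 : P.complex.X (i + 1) ⟶ Y) (i + 2) rfl f.2 i rfl).trans ?_
    constructor
    · rintro ⟨g, hg⟩
      exact ⟨g, Subtype.ext hg⟩
    · rintro ⟨g, hg⟩
      exact ⟨g, congrArg Subtype.val hg⟩
  let e4 : S.moduleCatLeftHomologyData.H ≃ₗ[R] Abelian.Ext X Y (i + 1) :=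
    (Submodule.quotEquivOfEq _ _ hk.symm).trans (φ.quotKerEquivOfSurjective hs)
  exact ⟨(e1 ≪≫ e2 ≪≫ e3).toLinearEquiv.trans e4⟩

end Bridge


section ExtTools

open Abelian

variable {R : Type u} [CommRing R]

/-- Vanishing of `Ext`. -/
abbrev AV (X Y : ModuleCat.{u} R) (n : ℕ) : Prop := Subsingleton (Abelian.Ext.{u} X Y n)

variable {S : ShortComplex (ModuleCat.{u} R)}

theorem subsing_of {A : Type*} [AddCommGroup A] (h : ∀ a : A, a = 0) : Subsingleton A :=
  ⟨fun a b => (h a).trans (h b).symm⟩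

theorem cov2 (hS : S.ShortExact) {X : ModuleCat.{u} R} {n : ℕ} (h1 : AV X S.X₁ n) (h3 : AV X S.X₃ n) :
    AV X S.X₂ n := subsing_of fun x => by
  obtain ⟨y, rfl⟩ := Ext.covariant_sequence_exact₂ X hS x (Subsingleton.elim _ _)
  rw [Subsingleton.elim y 0, Ext.zero_comp]

theorem cov3 (hS : S.ShortExact) {X : ModuleCat.{u} R} {n : ℕ} (h2 : AV X S.X₂ n) (h1 : AV X S.X₁ (n + 1)) :
    AV X S.X₃ n := subsing_of fun x => by
  obtain ⟨y, rfl⟩ := Ext.covariant_sequence_exact₃ X hS x rfl (Subsingleton.elim _ _)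
  rw [Subsingleton.elim y 0, Ext.zero_comp]

theorem cov1 (hS : S.ShortExact) {X : ModuleCat.{u} R} {n : ℕ} (h3 : AV X S.X₃ n) (h2 : AV X S.X₂ (n + 1)) :
    AV X S.X₁ (n + 1) := subsing_of fun x => by
  obtain ⟨y, rfl⟩ := Ext.covariant_sequence_exact₁ X hS x (Subsingleton.elim _ _) rfl
  rw [Subsingleton.elim y 0, Ext.zero_comp]

theorem conShift (hS : S.ShortExact) {Y : ModuleCat.{u} R} {n : ℕ} (h2 : AV S.X₂ Y n) (h2' : AV S.X₂ Y (n + 1)) :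
    Nonempty (Abelian.Ext S.X₃ Y (n + 1) ≃ₗ[R] Abelian.Ext S.X₁ Y n) := by
  let φ : Abelian.Ext S.X₁ Y n →ₗ[R] Abelian.Ext S.X₃ Y (n + 1) :=
    Ext.bilinearCompOfLinear R S.X₃ S.X₁ Y 1 n (n + 1) (by omega) hS.extClass
  have hφ : ∀ x, φ x = hS.extClass.comp x (by omega) := fun x => rfl
  refine ⟨(LinearEquiv.ofBijective φ ⟨?_, ?_⟩).symm⟩
  · rw [injective_iff_map_eq_zero]
    intro x hx
    obtain ⟨y, rfl⟩ := Ext.contravariant_sequence_exact₁ hS Y x (by omega) hx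
    rw [Subsingleton.elim y 0, Ext.comp_zero]
  · intro x
    obtain ⟨y, hy⟩ := Ext.contravariant_sequence_exact₃ hS Y x (Subsingleton.elim _ _)
      (n₀ := n) (by omega)
    exact ⟨y, hy⟩

theorem con1 (hS : S.ShortExact) {Y : ModuleCat.{u} R} (h2 : AV S.X₂ Y 1) :
    Nonempty (Abelian.Ext S.X₃ Y 1 ≃ₗ[R]
      ((S.X₁ ⟶ Y) ⧸ LinearMap.range (Linear.leftComp R Y S.f))) := by
  let φ : (S.X₁ ⟶ Y) →ₗ[R] Abelian.Ext S.X₃ Y 1 :=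
    (Ext.bilinearCompOfLinear R S.X₃ S.X₁ Y 1 0 1 (by omega) hS.extClass) ∘ₗ
      (Ext.linearEquiv₀ (R := R)).symm.toLinearMap
  have hφ : ∀ x, φ x = hS.extClass.comp (Ext.mk₀ x) (by omega) := fun x => rfl
  have hs : Function.Surjective φ := fun x => by
    obtain ⟨y, hy⟩ := Ext.contravariant_sequence_exact₃ hS Y x (Subsingleton.elim _ _)
      (n₀ := 0) (by omega)
    refine ⟨Ext.linearEquiv₀ (R := R) y, ?_⟩
    rw [hφ, Ext.mk₀_linearEquiv₀_apply, hy]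
  have hk : LinearMap.ker φ = LinearMap.range (Linear.leftComp R Y S.f) := by
    ext f
    rw [LinearMap.mem_ker, LinearMap.mem_range, hφ]
    constructor
    · intro h
      obtain ⟨y, hy⟩ := Ext.contravariant_sequence_exact₁ hS Y _ (by omega) h
      refine ⟨Ext.linearEquiv₀ (R := R) y, ?_⟩
      rw [← Ext.mk₀_linearEquiv₀_apply (R := R) y, Ext.mk₀_comp_mk₀] at hy
      exact (Ext.linearEquiv₀ (R := R)).symm.injective hy
    · rintro ⟨g, rfl⟩
      change hS.extClass.comp (Ext.mk₀ (S.f ≫ g)) _ = 0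
      rw [← Ext.mk₀_comp_mk₀, ShortComplex.ShortExact.extClass_comp_assoc]
  exact ⟨((Submodule.quotEquivOfEq _ _ hk.symm).trans (φ.quotKerEquivOfSurjective hs)).symm⟩

theorem con1_of_extend (hS : S.ShortExact) {Y : ModuleCat.{u} R} (h2 : AV S.X₂ Y 1)
    (h : ∀ f : S.X₁ ⟶ Y, ∃ g : S.X₂ ⟶ Y, S.f ≫ g = f) : AV S.X₃ Y 1 := by
  obtain ⟨e⟩ := con1 hS h2
  have : LinearMap.range (Linear.leftComp R Y S.f) = ⊤ := by
    rw [LinearMap.range_eq_top]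
    intro f
    exact h f
  have : Subsingleton ((S.X₁ ⟶ Y) ⧸ LinearMap.range (Linear.leftComp R Y S.f)) :=
    Submodule.Quotient.subsingleton_iff.mpr this
  exact e.toEquiv.subsingleton

theorem extend_of_con1 (hS : S.ShortExact) {Y : ModuleCat.{u} R} (h3 : AV S.X₃ Y 1)
    (f : S.X₁ ⟶ Y) : ∃ g : S.X₂ ⟶ Y, S.f ≫ g = f := by
  obtain ⟨y, hy⟩ := Ext.contravariant_sequence_exact₁ hS Y (Ext.mk₀ f) rfl (Subsingleton.elim _ _)
  refine ⟨Ext.linearEquiv₀ (R := R) y, ?_⟩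
  rw [← Ext.mk₀_linearEquiv₀_apply (R := R) y, Ext.mk₀_comp_mk₀] at hy
  exact (Ext.linearEquiv₀ (R := R)).symm.injective hy

theorem av_proj (P Y : ModuleCat.{u} R) [Projective P] (n : ℕ) : AV P Y (n + 1) :=
  subsing_of fun x => Ext.eq_zero_of_projective x

theorem av_iso {X Y Y' : ModuleCat.{u} R} {n : ℕ} (e : Y ≅ Y') (h : AV X Y n) : AV X Y' n :=
  subsing_of fun x => by
    have : x = (x.comp (Ext.mk₀ e.inv) (add_zero n)).comp (Ext.mk₀ e.hom) (add_zero n) := by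
      rw [Ext.comp_assoc_of_second_deg_zero, Ext.mk₀_comp_mk₀, e.inv_hom_id, Ext.comp_mk₀_id]
    rw [this, Subsingleton.elim (x.comp (Ext.mk₀ e.inv) (add_zero n)) 0, Ext.zero_comp]

theorem av_iso_left {X X' Y : ModuleCat.{u} R} {n : ℕ} (e : X ≅ X') (h : AV X Y n) : AV X' Y n :=
  subsing_of fun x => by
    have : x = (Ext.mk₀ e.inv).comp ((Ext.mk₀ e.hom).comp x (zero_add n)) (zero_add n) := by
      rw [Ext.mk₀_comp_mk₀_assoc, e.inv_hom_id, Ext.mk₀_id_comp]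
    rw [this, Subsingleton.elim ((Ext.mk₀ e.hom).comp x (zero_add n)) 0, Ext.comp_zero]

theorem av_zero {X Y : ModuleCat.{u} R} {n : ℕ} (h : Subsingleton Y) : AV X Y n :=
  subsing_of fun x => by
    have h0 : 𝟙 Y = 0 := by
      ext y
      exact Subsingleton.elim _ _
    rw [← Ext.comp_mk₀_id x, h0, Ext.mk₀_zero, Ext.comp_zero]

/-- The short exact sequence of linear maps. -/
theorem ses_of {A B C : Type u} [AddCommGroup A] [Module R A] [AddCommGroup B] [Module R B]
    [AddCommGroup C] [Module R C] (f : A →ₗ[R] B) (g : B →ₗ[R] C) (hf : Function.Injective f)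
    (hg : Function.Surjective g) (hfg : Function.Exact f g) :
    (ShortComplex.mk (ModuleCat.ofHom f) (ModuleCat.ofHom g)
      (by ext x; exact hfg.apply_apply_eq_zero x)).ShortExact :=
  ModuleCat.shortComplex_shortExact _ hfg hf hg

end ExtTools


section Inj
variable {A : Type u} [CommRing A]

theorem lemY {E X Y : Type u} [AddCommGroup E] [Module A E] [Module.Injective A E]
    [AddCommGroup X] [Module A X] [AddCommGroup Y] [Module A Y]
    (β : X →ₗ[A] Y) (Φ : X →ₗ[A] E) (h : LinearMap.ker β ≤ LinearMap.ker Φ) :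
    ∃ Ψ : Y →ₗ[A] E, Ψ ∘ₗ β = Φ := by
  obtain ⟨Ψ, hΨ⟩ := Module.Injective.extension_property A E _ _
    ((LinearMap.ker β).liftQ β le_rfl) (by
      rw [← LinearMap.ker_eq_bot]; exact Submodule.ker_liftQ_eq_bot _ _ _ le_rfl)
    ((LinearMap.ker β).liftQ Φ h)
  refine ⟨Ψ, ?_⟩
  ext x
  have := LinearMap.congr_fun hΨ (Submodule.Quotient.mk x)
  simpa using this

theorem exists_injective_embedding (X : Type u) [AddCommGroup X] [Module A X] :
    ∃ (I : ModuleCat.{u} A) (j : X →ₗ[A] I), Module.Injective A I ∧ Function.Injective j := by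
  have h : Injective (Injective.under (ModuleCat.of A X)) := inferInstance
  refine ⟨Injective.under (ModuleCat.of A X), (Injective.ι (ModuleCat.of A X)).hom, ?_, ?_⟩
  · exact Module.injective_module_of_injective_object A _ (inj := h)
  · exact (ModuleCat.mono_iff_injective _).1 inferInstance

theorem injective_of_retract {I N : Type u} [AddCommGroup I] [Module A I] [Module.Injective A I]
    [AddCommGroup N] [Module A N] (j : N →ₗ[A] I) (r : I →ₗ[A] N) (h : r ∘ₗ j = LinearMap.id) :
    Module.Injective A N := ⟨fun X Y _ _ _ _ f hf g => by
  obtain ⟨k, hk⟩ := Module.Injective.out f hf (j ∘ₗ g)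
  refine ⟨r ∘ₗ k, fun x => ?_⟩
  rw [LinearMap.comp_apply, hk x]
  exact LinearMap.congr_fun h (g x)⟩

/-- essential extension -/
def Ess {I : Type u} [AddCommGroup I] [Module A I] (B N : Submodule A I) : Prop :=
  ∀ x ∈ N, x ≠ 0 → ∃ a : A, a • x ≠ 0 ∧ a • x ∈ B

theorem exists_hull {I : Type u} [AddCommGroup I] [Module A I] [Module.Injective A I]
    (B : Submodule A I) : ∃ N : Submodule A I, B ≤ N ∧ Ess B N ∧ Module.Injective A N := by
  obtain ⟨N, hBN, hN⟩ := zorn_le_nonempty₀ {N : Submodule A I | Ess B N} (by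
    intro c hc hchain y hy
    refine ⟨sSup c, ?_, fun z hz => le_sSup hz⟩
    intro x hx hx0
    obtain ⟨N, hN, hxN⟩ := (Submodule.mem_sSup_of_directed ⟨y, hy⟩ hchain.directedOn).1 hx
    exact hc hN x hxN hx0) B (by
    intro x hx hx0
    exact ⟨1, by simpa using hx0, by simpa using hx⟩)
  have hE : Ess B N := hN.prop
  obtain ⟨U, -, hU⟩ := zorn_le_nonempty₀ {U : Submodule A I | U ⊓ N = ⊥} (by
    intro c hc hchain y hy
    refine ⟨sSup c, ?_, fun z hz => le_sSup hz⟩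
    rw [Set.mem_ofPred_eq, eq_bot_iff]
    rintro x ⟨hx, hxN⟩
    obtain ⟨U, hU, hxU⟩ := (Submodule.mem_sSup_of_directed ⟨y, hy⟩ hchain.directedOn).1 hx
    have : U ⊓ N = ⊥ := hc hU
    rw [← this]; exact ⟨hxU, hxN⟩) ⊥ (by simp)
  have hUN : U ⊓ N = ⊥ := hU.prop
  have hinj : LinearMap.ker (U.mkQ ∘ₗ N.subtype) ≤ LinearMap.ker N.subtype := by
    intro x hx
    have h1 : (x : I) ∈ U := by simpa using hx
    have h2 : (x : I) ∈ U ⊓ N := ⟨h1, x.2⟩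
    rw [hUN] at h2
    simpa using h2
  obtain ⟨g, hg⟩ := lemY (U.mkQ ∘ₗ N.subtype) N.subtype hinj
  have hess : ∀ y : I, y ∉ U → ∃ a : A, ∃ n ∈ N, n ≠ 0 ∧ U.mkQ (a • y) = U.mkQ n := by
    intro y hy
    by_contra hcon
    push Not at hcon
    apply hy
    have h1 : (U ⊔ Submodule.span A {y}) ⊓ N = ⊥ := by
      rw [eq_bot_iff]
      rintro x ⟨hx, hxN⟩
      obtain ⟨v, hv, w, hw, rfl⟩ := Submodule.mem_sup.1 hx
      obtain ⟨a, rfl⟩ := Submodule.mem_span_singleton.1 hw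
      by_contra h0
      refine hcon a _ hxN h0 ?_
      rw [map_add]
      simp [hv]
    have := hU.le_of_ge (y := U ⊔ Submodule.span A {y}) h1 le_sup_left
    exact this (Submodule.mem_sup_right (Submodule.mem_span_singleton_self y))
  have hgN : ∀ n ∈ N, g (U.mkQ n) = n := fun n hn => LinearMap.congr_fun hg ⟨n, hn⟩
  have hrange : Ess B (LinearMap.range g) := by
    rintro _ ⟨y, rfl⟩ hy
    obtain ⟨y, rfl⟩ := U.mkQ_surjective y
    have hyU : y ∉ U := fun h => hy (by
      have : U.mkQ y = 0 := by simpa using h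
      rw [this, map_zero])
    obtain ⟨a, n, hn, hn0, h⟩ := hess y hyU
    have h2 : a • g (U.mkQ y) = n := by rw [← map_smul, ← map_smul, h, hgN n hn]
    obtain ⟨b, hb0, hb⟩ := hE n hn hn0
    exact ⟨b * a, by rwa [mul_smul, h2], by rwa [mul_smul, h2]⟩
  have hle : N ≤ LinearMap.range g := fun n hn => ⟨_, hgN n hn⟩
  have hge := hN.le_of_ge hrange hle
  refine ⟨N, hBN, hE, injective_of_retract N.subtype
    ((g ∘ₗ U.mkQ).codRestrict N fun x => hge ⟨_, rfl⟩) ?_⟩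
  ext x
  simpa using hgN x x.2

/-- Injective hull of `A/q` -/
theorem exists_prime_hull (q : Ideal A) : ∃ (E : ModuleCat.{u} A) (e : E),
    Module.Injective A E ∧ (∀ a : A, a • e = 0 ↔ a ∈ q) ∧
    ∀ x : E, x ≠ 0 → ∃ a b : A, a • x ≠ 0 ∧ a • x = b • e := by
  obtain ⟨I, j, hI, hj⟩ := exists_injective_embedding (A := A) (A ⧸ q)
  obtain ⟨N, hBN, hE, hN⟩ := exists_hull (LinearMap.range j)
  refine ⟨ModuleCat.of A N, ⟨j 1, hBN ⟨1, rfl⟩⟩, hN, ?_, ?_⟩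
  · intro a
    have : a • j 1 = j (Ideal.Quotient.mk q a) := by
      rw [← map_smul]; congr 1; rw [Algebra.smul_def, mul_one]; rfl
    rw [← Subtype.val_inj]
    change a • j 1 = 0 ↔ _
    rw [this, map_eq_zero_iff j hj, Ideal.Quotient.eq_zero_iff_mem]
  · rintro ⟨x, hx⟩ hx0
    obtain ⟨a, ha, ⟨y, hy⟩⟩ := hE x hx (fun h => hx0 (Subtype.ext h))
    obtain ⟨b, rfl⟩ := Ideal.Quotient.mk_surjective y
    refine ⟨a, b, fun h => ha (congrArg Subtype.val h), Subtype.ext ?_⟩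
    change a • x = b • j 1
    rw [← hy, ← map_smul]; congr 1; rw [Algebra.smul_def, mul_one]; rfl

theorem syz_exists [IsNoetherianRing A] {r : ℕ} (f : Fin r → A) :
    ∃ (m : ℕ) (a : Fin m → Fin r → A), (∀ j, ∑ i, f i * a j i = 0) ∧
      ∀ c : Fin r → A, ∑ i, f i * c i = 0 → ∃ b : Fin m → A, ∀ i, c i = ∑ j, b j * a j i := by
  let K : Submodule A (Fin r → A) := LinearMap.ker (Fintype.linearCombination A f)
  have hK : K.FG := IsNoetherian.noetherian K
  obtain ⟨m, a, ha⟩ := Submodule.fg_iff_exists_fin_generating_family.1 hK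
  have hmem : ∀ c : Fin r → A, c ∈ K ↔ ∑ i, f i * c i = 0 := by
    intro c
    simp [K, Fintype.linearCombination_apply, mul_comm]
  refine ⟨m, a, fun j => (hmem _).1 (ha ▸ Submodule.subset_span ⟨j, rfl⟩), fun c hc => ?_⟩
  have := (hmem c).2 hc
  rw [← ha, Submodule.mem_span_range_iff_exists_fun] at this
  obtain ⟨b, hb⟩ := this
  refine ⟨b, fun i => ?_⟩
  rw [← hb]; simp

variable [IsNoetherianRing A]

theorem flat_syz {G : Type*} [AddCommGroup G] [Module A G] [Module.Flat A G] {r m : ℕ}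
    {f : Fin r → A} {a : Fin m → Fin r → A}
    (ha : ∀ c : Fin r → A, ∑ i, f i * c i = 0 → ∃ b : Fin m → A, ∀ i, c i = ∑ j, b j * a j i)
    (x : Fin r → G) (hx : ∑ i, f i • x i = 0) :
    ∃ y : Fin m → G, ∀ i, x i = ∑ j, a j i • y j := by
  obtain ⟨k, c, y, h1, h2⟩ := Module.Flat.isTrivialRelation_of_sum_smul_eq_zero hx
  choose b hb using fun l => ha (fun i => c i l) (h2 l)
  refine ⟨fun j => ∑ l, b l j • y l, fun i => ?_⟩
  rw [h1 i]
  simp_rw [hb, Finset.sum_smul, Finset.smul_sum, smul_smul]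
  rw [Finset.sum_comm]
  simp_rw [mul_comm]

theorem flat_of_syz {G : Type*} [AddCommGroup G] [Module A G]
    (h : ∀ {r m : ℕ} (f : Fin r → A) (a : Fin m → Fin r → A), (∀ j, ∑ i, f i * a j i = 0) →
      (∀ c : Fin r → A, ∑ i, f i * c i = 0 → ∃ b : Fin m → A, ∀ i, c i = ∑ j, b j * a j i) →
      ∀ x : Fin r → G, ∑ i, f i • x i = 0 → ∃ y : Fin m → G, ∀ i, x i = ∑ j, a j i • y j) :
    Module.Flat A G := by
  refine Module.Flat.of_forall_isTrivialRelation fun {l f x} hx => ?_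
  obtain ⟨m, a, h1, h2⟩ := syz_exists f
  obtain ⟨y, hy⟩ := h f a h1 h2 x hx
  exact ⟨m, fun i j => a j i, y, hy, h1⟩

theorem flat_pi {ι : Type*} (G : ι → Type*) [∀ i, AddCommGroup (G i)] [∀ i, Module A (G i)]
    [∀ i, Module.Flat A (G i)] : Module.Flat A (∀ i, G i) := by
  refine flat_of_syz fun f a _ h2 x hx => ?_
  choose y hy using fun k => flat_syz h2 (fun i => x i k) (by
    have := congrFun hx k; simpa using this)
  refine ⟨fun j k => y k j, fun i => ?_⟩
  ext k
  simp [hy k i]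

theorem lemX {E : Type u} [AddCommGroup E] [Module A E] [Module.Injective A E] {r m : ℕ}
    {f : Fin r → A} {a : Fin m → Fin r → A}
    (ha : ∀ c : Fin r → A, ∑ i, f i * c i = 0 → ∃ b : Fin m → A, ∀ i, c i = ∑ j, b j * a j i)
    (x : Fin r → E) (hx : ∀ j, ∑ i, a j i • x i = 0) : ∃ e : E, ∀ i, x i = f i • e := by
  obtain ⟨Ψ, hΨ⟩ := lemY (Fintype.linearCombination A f) (Fintype.linearCombination A x) (by
    intro c hc
    obtain ⟨b, hb⟩ := ha c (by
      simpa [Fintype.linearCombination_apply, mul_comm] using hc)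
    rw [LinearMap.mem_ker, Fintype.linearCombination_apply]
    simp_rw [hb, Finset.sum_smul]
    rw [Finset.sum_comm]
    simp_rw [mul_smul, ← Finset.smul_sum, hx]
    simp)
  refine ⟨Ψ 1, fun i => ?_⟩
  classical
  have := LinearMap.congr_fun hΨ (Pi.single i 1)
  simp only [LinearMap.comp_apply, Fintype.linearCombination_apply_single] at this
  rw [← map_smul]
  simpa using this.symm

theorem flat_hom {E E' : Type u} [AddCommGroup E] [Module A E] [Module.Injective A E]
    [AddCommGroup E'] [Module A E'] [Module.Injective A E'] : Module.Flat A (E →ₗ[A] E') := by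
  refine flat_of_syz fun {r m} f a _ h2 x hx => ?_
  let β : (Fin r → E) →ₗ[A] (Fin m → E) := LinearMap.pi fun j => ∑ i, a j i • LinearMap.proj i
  let Φ : (Fin r → E) →ₗ[A] E' := ∑ i, x i ∘ₗ LinearMap.proj i
  obtain ⟨Ψ, hΨ⟩ := lemY β Φ (by
    intro z hz
    obtain ⟨e, he⟩ := lemX h2 z (fun j => by
      have := congrFun (LinearMap.mem_ker.1 hz) j
      simpa [β] using this)
    have h3 := LinearMap.congr_fun hx e
    simp only [LinearMap.sum_apply, LinearMap.smul_apply, LinearMap.zero_apply] at h3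
    simp [Φ, he, h3])
  refine ⟨fun j => Ψ ∘ₗ LinearMap.single A (fun _ => E) j, fun i => ?_⟩
  ext e
  have := LinearMap.congr_fun hΨ (Pi.single i e)
  have hβ : β (Pi.single i e) = ∑ j, Pi.single j (a j i • e) := by
    ext j
    simp [β, Pi.single_apply, Finset.sum_apply]
  have hΦ : Φ (Pi.single i e) = x i e := by
    simp only [Φ, LinearMap.sum_apply, LinearMap.comp_apply, LinearMap.proj_apply]
    rw [Finset.sum_eq_single i]
    · simp
    · intro k _ hk; simp [Pi.single_apply, hk]
    · simp
  rw [LinearMap.comp_apply, hβ, hΦ, map_sum] at this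
  rw [← this]
  simp only [LinearMap.sum_apply, LinearMap.smul_apply, LinearMap.comp_apply, LinearMap.coe_single]
  refine Finset.sum_congr rfl fun j _ => ?_
  rw [Pi.single_smul', map_smul]

theorem injective_tensor {G E : Type u} [AddCommGroup E] [Module A E] [Module.Injective A E]
    [AddCommGroup G] [Module A G] [Module.Flat A G] : Module.Injective A (G ⊗[A] E) := by
  refine Module.Baer.injective fun I g => ?_
  obtain ⟨r, f, hf⟩ := Submodule.fg_iff_exists_fin_generating_family.1 (IsNoetherian.noetherian I)
  obtain ⟨m, a, h1, h2⟩ := syz_exists f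
  have hfI : ∀ i, f i ∈ I := fun i => hf ▸ Submodule.subset_span ⟨i, rfl⟩
  let α : E →ₗ[A] (Fin r → E) := LinearMap.pi fun i => f i • LinearMap.id
  let β : (Fin r → E) →ₗ[A] (Fin m → E) := LinearMap.pi fun j => ∑ i, a j i • LinearMap.proj i
  have hex : Function.Exact α β := by
    intro z
    constructor
    · intro hz
      obtain ⟨e, he⟩ := lemX h2 z (fun j => by
        have := congrFun hz j
        simpa [β] using this)
      exact ⟨e, by ext i; simp [α, he]⟩
    · rintro ⟨e, rfl⟩
      ext j
      have h := h1 j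
      simp only [β, α, LinearMap.pi_apply, LinearMap.sum_apply, LinearMap.smul_apply,
        LinearMap.proj_apply, LinearMap.id_apply, Pi.zero_apply, smul_smul, ← Finset.sum_smul]
      simp_rw [mul_comm (a j _), h, zero_smul]
  have hex' := Module.Flat.lTensor_exact G hex
  let pr := TensorProduct.piRight A A G (fun _ : Fin r => E)
  let pm := TensorProduct.piRight A A G (fun _ : Fin m => E)
  have c1 : ∀ z i, pr (LinearMap.lTensor G α z) i = f i • z := by
    intro z i
    induction z with
    | zero => simp
    | add x y hx hy => simp only [map_add, Pi.add_apply, hx, hy, smul_add]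
    | tmul x y => simp [pr, α, TensorProduct.piRight_apply]
  have c2 : ∀ z j, pm (LinearMap.lTensor G β z) j = ∑ i, a j i • pr z i := by
    intro z i
    induction z with
    | zero => simp
    | add x y hx hy => simp only [map_add, Pi.add_apply, hx, hy, smul_add, Finset.sum_add_distrib]
    | tmul x y => simp [pr, pm, β, TensorProduct.piRight_apply, TensorProduct.tmul_sum]
  let x : Fin r → G ⊗[A] E := fun i => g ⟨f i, hfI i⟩
  have hx : LinearMap.lTensor G β (pr.symm x) = 0 := by
    apply pm.injective
    ext j
    rw [c2, map_zero]
    simp only [LinearEquiv.apply_symm_apply, x, ← map_smul, ← map_sum, Pi.zero_apply]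
    convert map_zero g
    ext
    have h := h1 j
    simp_rw [mul_comm (f _)] at h
    simpa using h
  obtain ⟨z, hz⟩ := (hex' _).1 hx
  refine ⟨LinearMap.toSpanSingleton A _ z, fun y hy => ?_⟩
  have hy' := hy
  rw [← hf, Submodule.mem_span_range_iff_exists_fun] at hy'
  obtain ⟨c, hc⟩ := hy'
  have hxi : ∀ i, g ⟨f i, hfI i⟩ = f i • z := fun i => by
    rw [← c1, hz]; simp [x]
  have : (⟨y, hy⟩ : I) = ∑ i, c i • ⟨f i, hfI i⟩ := by
    ext; simp [← hc]
  rw [this, map_sum]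
  simp_rw [map_smul, hxi]
  rw [LinearMap.toSpanSingleton_apply, ← hc, Finset.sum_smul]
  simp [mul_smul]

end Inj


set_option linter.unusedSectionVars false
section Hull
variable {A : Type u} [CommRing A]

/-- a chosen injective hull of `A/q` -/
noncomputable def HE (q : PrimeSpectrum A) : ModuleCat.{u} A :=
  (exists_prime_hull q.asIdeal).choose

noncomputable def he (q : PrimeSpectrum A) : HE q :=
  (exists_prime_hull q.asIdeal).choose_spec.choose

instance HE_inj (q : PrimeSpectrum A) : Module.Injective A (HE q) :=
  (exists_prime_hull q.asIdeal).choose_spec.choose_spec.1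

theorem he_ann (q : PrimeSpectrum A) (a : A) : a • he q = 0 ↔ a ∈ q.asIdeal :=
  (exists_prime_hull q.asIdeal).choose_spec.choose_spec.2.1 a

theorem HE_ess (q : PrimeSpectrum A) (x : HE q) (hx : x ≠ 0) :
    ∃ a b : A, a • x ≠ 0 ∧ a • x = b • he q :=
  (exists_prime_hull q.asIdeal).choose_spec.choose_spec.2.2 x hx

theorem HE_smul_inj (q : PrimeSpectrum A) {s : A} (hs : s ∉ q.asIdeal) (x : HE q)
    (h : s • x = 0) : x = 0 := by
  by_contra hx
  obtain ⟨a, b, h0, hab⟩ := HE_ess q x hx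
  have h1 : s • (a • x) = 0 := by rw [smul_comm, h, smul_zero]
  rw [hab, smul_smul, he_ann] at h1
  rw [hab, Ne, he_ann] at h0
  exact (q.2.mem_or_mem h1).elim hs h0

theorem HE_kill (q : PrimeSpectrum A) (x : HE q) (h : ∀ c ∈ q.asIdeal, c • x = 0) :
    ∃ s b : A, s ∉ q.asIdeal ∧ s • x = b • he q := by
  by_cases hx : x = 0
  · exact ⟨1, 0, fun h => q.2.ne_top ((Ideal.eq_top_iff_one _).2 h), by simp [hx]⟩
  · obtain ⟨a, b, h0, hab⟩ := HE_ess q x hx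
    exact ⟨a, b, fun ha => h0 (h a ha), hab⟩

variable (G : Type u) [AddCommGroup G] [Module A G] [Module.Flat A G]

theorem tHE_smul_inj (q : PrimeSpectrum A) {s : A} (hs : s ∉ q.asIdeal) (z : G ⊗[A] HE q)
    (h : s • z = 0) : z = 0 := by
  have h1 := Module.Flat.lTensor_preserves_injective_linearMap (M := G)
    (LinearMap.lsmul A (HE q) s) (by
      rw [← LinearMap.ker_eq_bot, eq_bot_iff]
      intro x hx
      exact HE_smul_inj q hs x (LinearMap.mem_ker.1 hx))
  apply h1
  rw [map_zero, ← h]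
  induction z with
  | zero => simp
  | add x y hx hy => 
    have : ∀ z : G ⊗[A] HE q, (LinearMap.lTensor G ((LinearMap.lsmul A (HE q)) s)) z = s • z := by
      intro z
      induction z with
      | zero => simp
      | add x y hx hy => simp only [map_add, hx, hy, smul_add]
      | tmul x y => simp
    exact this _
  | tmul x y => simp

variable [IsNoetherianRing A]

theorem tHE_kill (q : PrimeSpectrum A) (z : G ⊗[A] HE q) (h : ∀ c ∈ q.asIdeal, c • z = 0) :
    ∃ (s : A) (g : G), s ∉ q.asIdeal ∧ s • z = g ⊗ₜ he q := by
  obtain ⟨r, f, hf⟩ := Submodule.fg_iff_exists_fin_generating_family.1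
    (IsNoetherian.noetherian q.asIdeal)
  have hfI : ∀ i, f i ∈ q.asIdeal := fun i => hf ▸ Submodule.subset_span ⟨i, rfl⟩
  let α : HE q →ₗ[A] (Fin r → HE q) := LinearMap.pi fun i => f i • LinearMap.id
  have hker : ∀ x ∈ LinearMap.ker α, ∀ c ∈ q.asIdeal, c • x = 0 := by
    intro x hx c hc
    have h1 : ∀ i, f i • x = 0 := fun i => by
      exact congrFun (LinearMap.mem_ker.1 hx) i
    rw [← hf, Submodule.mem_span_range_iff_exists_fun] at hc
    obtain ⟨b, rfl⟩ := hc
    simp [Finset.sum_smul, mul_smul, h1]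
  have hex : Function.Exact (LinearMap.ker α).subtype α := by
    intro x; simp
  have hex' := Module.Flat.lTensor_exact G hex
  let pr := TensorProduct.piRight A A G (fun _ : Fin r => (HE q : Type u))
  have c1 : ∀ z i, pr (LinearMap.lTensor G α z) i = f i • z := by
    intro z i
    induction z with
    | zero => simp
    | add x y hx hy => simp only [map_add, Pi.add_apply, hx, hy, smul_add]
    | tmul x y => simp [pr, α, TensorProduct.piRight_apply]
  obtain ⟨w, rfl⟩ := (hex' z).1 (pr.injective (by
    ext i; rw [c1, h _ (hfI i), map_zero]; rfl))
  clear h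
  have h1 : (1 : A) ∉ q.asIdeal := fun h => q.2.ne_top ((Ideal.eq_top_iff_one _).2 h)
  induction w with
  | zero => exact ⟨1, 0, h1, by simp⟩
  | tmul x y =>
    obtain ⟨s, b, hs, hb⟩ := HE_kill q y.1 (hker y.1 y.2)
    refine ⟨s, b • x, hs, ?_⟩
    simp only [LinearMap.lTensor_tmul, Submodule.subtype_apply]
    rw [← TensorProduct.tmul_smul, hb, TensorProduct.smul_tmul]
  | add x y hx hy =>
    obtain ⟨s, g, hs, hg⟩ := hx
    obtain ⟨s', g', hs', hg'⟩ := hy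
    refine ⟨s * s', s' • g + s • g', fun h => (q.2.mem_or_mem h).elim hs hs', ?_⟩
    rw [map_add, smul_add, mul_comm, mul_smul, hg, mul_comm, mul_smul, hg', add_tmul,
      smul_tmul', smul_tmul']

theorem mem_smul_top_of_gen {W : Type*} [AddCommGroup W] [Module A W] {r : ℕ} {f : Fin r → A}
    {I : Ideal A} (hf : Submodule.span A (Set.range f) = I) (y : W) :
    y ∈ I • (⊤ : Submodule A W) ↔ ∃ g : Fin r → W, y = ∑ i, f i • g i := by
  constructor
  · intro h
    induction h using Submodule.smul_induction_on' with
    | smul c hc n hn =>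
      rw [← hf, Submodule.mem_span_range_iff_exists_fun] at hc
      obtain ⟨b, rfl⟩ := hc
      exact ⟨fun i => b i • n, by simp [Finset.sum_smul, smul_smul, mul_comm]⟩
    | add x hx y hy h1 h2 =>
      obtain ⟨g, rfl⟩ := h1
      obtain ⟨g', rfl⟩ := h2
      exact ⟨g + g', by simp [Finset.sum_add_distrib]⟩
  · rintro ⟨g, rfl⟩
    exact Submodule.sum_mem _ fun i _ => Submodule.smul_mem_smul
      (hf ▸ Submodule.subset_span ⟨i, rfl⟩) trivial

theorem detect (T : Set (PrimeSpectrum A))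
    (hG : ∀ p : PrimeSpectrum A, p ∉ T → p.asIdeal • (⊤ : Submodule A G) = ⊤)
    (M : Type u) [AddCommGroup M] [Module A M] [hM : Module.Finite A M] (z : G ⊗[A] M)
    (hz : ∀ q ∈ T, ∀ h : M →ₗ[A] HE q, LinearMap.lTensor G h z = 0) : z = 0 := by
  revert z
  induction hM using IsNoetherianRing.induction_on_isQuotientEquivQuotientPrime A with
  | subsingleton N =>
    intro z _
    exact Subsingleton.elim _ _
  | quotient N p e =>
    intro z hz
    by_cases hp : p ∈ T
    · let h : (A ⧸ p.asIdeal) →ₗ[A] HE p := p.asIdeal.liftQ (LinearMap.toSpanSingleton A _ (he p))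
        (fun a ha => (he_ann p a).2 ha)
      have hinj : Function.Injective h := by
        rw [← LinearMap.ker_eq_bot]
        refine Submodule.ker_liftQ_eq_bot _ _ _ fun a ha => ?_
        exact (he_ann p a).1 ha
      have := Module.Flat.lTensor_preserves_injective_linearMap (M := G) (h ∘ₗ e.toLinearMap)
        (by simpa using hinj)
      exact this (by rw [hz p hp, map_zero])
    · have key : ∀ (g : G) (n : N), g ⊗ₜ[A] n = 0 := by
        intro g n
        have hg : g ∈ p.asIdeal • (⊤ : Submodule A G) := by rw [hG p hp]; trivial
        induction hg using Submodule.smul_induction_on' with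
        | smul c hc g' _ =>
          rw [TensorProduct.smul_tmul]
          have : c • n = 0 := e.injective (by
            rw [map_smul, map_zero]
            obtain ⟨b, hb⟩ := Ideal.Quotient.mk_surjective (e n)
            rw [← hb, Algebra.smul_def]
            change Ideal.Quotient.mk p.asIdeal c * _ = 0
            rw [Ideal.Quotient.eq_zero_iff_mem.2 hc, zero_mul])
          rw [this, tmul_zero]
        | add x _ y _ h1 h2 => rw [add_tmul, h1, h2, add_zero]
      induction z with
      | zero => rfl
      | tmul x y => exact key x y
      | add x y hx hy =>
        have : ∀ z : G ⊗[A] N, z = 0 := fun z => by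
          induction z with
          | zero => rfl
          | tmul x y => exact key x y
          | add x y hx hy => rw [hx, hy, add_zero]
        exact this _
  | exact N₁ N₂ N₃ f g hf hg hfg ih1 ih3 =>
    intro z hz
    have h3 : LinearMap.lTensor G g z = 0 := ih3 _ fun q hq h => by
      rw [← LinearMap.comp_apply, ← LinearMap.lTensor_comp]
      exact hz q hq _
    obtain ⟨w, rfl⟩ := ((lTensor_exact G hfg hg) z).1 h3
    rw [ih1 w fun q hq h => ?_, map_zero]
    obtain ⟨h', hh'⟩ := Module.Injective.extension_property A (HE q) _ _ f hf h
    have := hz q hq h'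
    rwa [← LinearMap.comp_apply, ← LinearMap.lTensor_comp, hh'] at this

/-- The module `P`. -/
abbrev PP (T : Set (PrimeSpectrum A)) (G : Type u) [AddCommGroup G] [Module A G] : Type u :=
  (q : T) → (HE q.1 →ₗ[A] G ⊗[A] HE q.1)

noncomputable def iot (T : Set (PrimeSpectrum A)) (G : Type u) [AddCommGroup G] [Module A G] :
    G →ₗ[A] PP T G := LinearMap.pi fun q => TensorProduct.mk A G (HE q.1)

theorem iot_apply (T : Set (PrimeSpectrum A)) (g : G) (q : T) (x : HE q.1) :
    iot T G g q x = g ⊗ₜ x := rfl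

theorem PP_flat (T : Set (PrimeSpectrum A)) : Module.Flat A (PP T G) := by
  have : ∀ q : T, Module.Injective A (G ⊗[A] HE q.1) := fun q => injective_tensor
  have : ∀ q : T, Module.Flat A (HE q.1 →ₗ[A] G ⊗[A] HE q.1) := fun q => flat_hom
  exact flat_pi _

variable {T : Set (PrimeSpectrum A)}

theorem iot_pure (hG : ∀ p : PrimeSpectrum A, p ∉ T → p.asIdeal • (⊤ : Submodule A G) = ⊤)
    (I : Ideal A) (y : G) (hy : iot T G y ∈ I • (⊤ : Submodule A (PP T G))) :
    y ∈ I • (⊤ : Submodule A G) := by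
  have h0 := detect G T hG (A ⧸ I) (y ⊗ₜ[A] (Ideal.Quotient.mk I 1)) (by
    intro q hq h
    rw [LinearMap.lTensor_tmul]
    set x := h (Ideal.Quotient.mk I 1)
    have hx : ∀ c ∈ I, c • x = 0 := by
      intro c hc
      rw [← map_smul, Algebra.smul_def]
      change h (Ideal.Quotient.mk I c * _) = 0
      rw [Ideal.Quotient.eq_zero_iff_mem.2 hc, zero_mul, map_zero]
    have : ∀ φ ∈ I • (⊤ : Submodule A (PP T G)), φ ⟨q, hq⟩ x = 0 := by
      intro φ hφ
      induction hφ using Submodule.smul_induction_on' with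
      | smul c hc n _ => 
        change (c • n ⟨q, hq⟩) x = 0
        rw [LinearMap.smul_apply, ← map_smul, hx c hc, map_zero]
      | add u _ v _ h1 h2 => 
        change u ⟨q, hq⟩ x + v ⟨q, hq⟩ x = 0
        rw [h1, h2, add_zero]
    exact this _ hy)
  have h1 := congrArg (TensorProduct.tensorQuotEquivQuotSMul G I) h0
  rw [TensorProduct.tensorQuotEquivQuotSMul_tmul_mk, map_zero, one_smul] at h1
  simpa using h1

theorem iot_inj (hG : ∀ p : PrimeSpectrum A, p ∉ T → p.asIdeal • (⊤ : Submodule A G) = ⊤) :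
    Function.Injective (iot T G) := by
  rw [← LinearMap.ker_eq_bot, eq_bot_iff]
  intro y hy
  have := iot_pure G hG ⊥ y (by rw [LinearMap.mem_ker.1 hy]; exact zero_mem _)
  simpa using this

theorem coker_flat (hG : ∀ p : PrimeSpectrum A, p ∉ T → p.asIdeal • (⊤ : Submodule A G) = ⊤) :
    Module.Flat A (PP T G ⧸ LinearMap.range (iot T G)) := by
  have := PP_flat G T
  refine flat_of_syz fun {r m} f a _ h2 x hx => ?_
  choose x' hx' using fun i => Submodule.mkQ_surjective _ (x i)
  have h3 : ∑ i, f i • x' i ∈ LinearMap.range (iot T G) := by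
    rw [← Submodule.Quotient.mk_eq_zero, ← Submodule.mkQ_apply, map_sum]
    simpa [← hx'] using hx
  obtain ⟨y, hy⟩ := h3
  have h4 := iot_pure G hG _ y (by
    rw [hy]; exact (mem_smul_top_of_gen (f := f) rfl _).2 ⟨x', rfl⟩)
  obtain ⟨g, rfl⟩ := (mem_smul_top_of_gen (f := f) rfl _).1 h4
  obtain ⟨w, hw⟩ := flat_syz h2 (fun i => x' i - iot T G (g i)) (by
    simp only [smul_sub, Finset.sum_sub_distrib, ← hy, map_sum, map_smul, sub_self])
  refine ⟨fun j => Submodule.mkQ _ (w j), fun i => ?_⟩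
  have := congrArg (LinearMap.range (iot T G)).mkQ (hw i)
  rw [map_sub, hx', (LinearMap.range (iot T G)).mkQ_apply (iot T G (g i)),
    (Submodule.Quotient.mk_eq_zero (LinearMap.range (iot T G))).2 (LinearMap.mem_range_self (iot T G) (g i)), sub_zero] at this
  rw [this, map_sum]
  rfl

theorem mem_of_kill (p : Ideal A) (ψ : PP T G)
    (h : ∀ (q : T) (x : HE q.1), (∀ c ∈ p, c • x = 0) → ψ q x = 0) :
    ψ ∈ p • (⊤ : Submodule A (PP T G)) := by
  obtain ⟨r, f, hf⟩ := Submodule.fg_iff_exists_fin_generating_family.1 (IsNoetherian.noetherian p)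
  have key : ∀ q : T, ∃ g : Fin r → (HE q.1 →ₗ[A] G ⊗[A] HE q.1), ψ q = ∑ i, f i • g i := by
    intro q
    have : Module.Injective A (G ⊗[A] HE q.1) := injective_tensor
    let α : HE q.1 →ₗ[A] (Fin r → HE q.1) := LinearMap.pi fun i => f i • LinearMap.id
    obtain ⟨Ψ, hΨ⟩ := lemY α (ψ q) (by
      intro x hx
      refine h q x fun c hc => ?_
      have h1 : ∀ i, f i • x = 0 := fun i => by
        exact congrFun (LinearMap.mem_ker.1 hx) i
      rw [← hf, Submodule.mem_span_range_iff_exists_fun] at hc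
      obtain ⟨b, rfl⟩ := hc
      simp [Finset.sum_smul, mul_smul, h1])
    refine ⟨fun i => Ψ ∘ₗ LinearMap.single A (fun _ => (HE q.1 : Type u)) i, ?_⟩
    rw [← hΨ]
    ext x
    have : α x = ∑ i, f i • Pi.single i x := by
      ext j
      simp [α, Finset.sum_apply, Pi.single_apply]
    simp [this]
  choose g hg using key
  refine (mem_smul_top_of_gen hf _).2 ⟨fun i q => g q i, ?_⟩
  ext1 q
  rw [hg q]
  simp

theorem coker_C (hG : ∀ p : PrimeSpectrum A, p ∉ T → p.asIdeal • (⊤ : Submodule A G) = ⊤)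
    (p : PrimeSpectrum A) (hp : ∀ q ∈ T, p ≤ q → q = p) :
    p.asIdeal • (⊤ : Submodule A (PP T G ⧸ LinearMap.range (iot T G))) = ⊤ := by
  rw [eq_top_iff]
  rintro y -
  obtain ⟨φ, rfl⟩ := Submodule.mkQ_surjective _ y
  have h1 : (1 : A) ∉ p.asIdeal := fun h => p.2.ne_top ((Ideal.eq_top_iff_one _).2 h)
  have hzero : ∀ q ∈ T, q ≠ p → ∀ x : HE q, (∀ c ∈ p.asIdeal, c • x = 0) → x = 0 := by
    intro q hq hne x hx
    have : ¬ p.asIdeal ≤ q.asIdeal := fun h => hne (hp q hq h)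
    obtain ⟨c, hc, hcq⟩ := Set.not_subset.1 this
    exact HE_smul_inj q hcq x (hx c hc)
  have key : ∃ s ∉ p.asIdeal, ∃ g : G, s • φ - iot T G g ∈
      p.asIdeal • (⊤ : Submodule A (PP T G)) := by
    by_cases hpT : p ∈ T
    · obtain ⟨s, g, hs, hsg⟩ := tHE_kill G p (φ ⟨p, hpT⟩ (he p)) (fun c hc => by
        rw [← map_smul, (he_ann p c).2 hc, map_zero])
      refine ⟨s, hs, g, mem_of_kill G _ _ ?_⟩
      rintro ⟨q, hq⟩ x hx
      by_cases hqp : q = p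
      · subst hqp
        obtain ⟨t, b, ht, htb⟩ := HE_kill q x hx
        refine tHE_smul_inj G q ht _ ?_
        rw [← map_smul]
        change ((s • φ - iot T G g) ⟨q, hq⟩) (t • x) = 0
        rw [htb, map_smul]
        change b • (s • φ ⟨q, hq⟩ (he q) - g ⊗ₜ he q) = 0
        rw [hsg, sub_self, smul_zero]
      · rw [hzero q hq hqp x hx, map_zero]
    · refine ⟨1, h1, 0, mem_of_kill G _ _ ?_⟩
      rintro ⟨q, hq⟩ x hx
      rw [hzero q hq (fun h => hpT (h ▸ hq)) x hx, map_zero]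
  obtain ⟨s, hs, g, hmem⟩ := key
  have := coker_flat G hG
  obtain ⟨r, f, hf⟩ := Submodule.fg_iff_exists_fin_generating_family.1
    (IsNoetherian.noetherian p.asIdeal)
  obtain ⟨w, hw⟩ := (mem_smul_top_of_gen hf _).1 hmem
  have hw' : s • Submodule.mkQ (LinearMap.range (iot T G)) φ =
      ∑ i, f i • Submodule.mkQ (LinearMap.range (iot T G)) (w i) := by
    have := congrArg (LinearMap.range (iot T G)).mkQ hw
    rw [map_sub, (LinearMap.range (iot T G)).mkQ_apply (iot T G g),
      (Submodule.Quotient.mk_eq_zero (LinearMap.range (iot T G))).2 (LinearMap.mem_range_self (iot T G) g), sub_zero, map_sum, map_smul] at this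
    rw [this]; rfl
  obtain ⟨k, a, y, hy, hrel⟩ := Module.Flat.isTrivialRelation_of_sum_smul_eq_zero
    (ι := Option (Fin r)) (f := fun o => o.elim s f)
    (x := fun o => o.elim (Submodule.mkQ (LinearMap.range (iot T G)) φ)
      (fun i => - Submodule.mkQ (LinearMap.range (iot T G)) (w i))) (by
      simp only [Fintype.sum_option, Option.elim, smul_neg, Finset.sum_neg_distrib]
      rw [hw', add_neg_cancel])
  have h2 := hy none
  simp only [Option.elim] at h2
  rw [h2]
  refine Submodule.sum_mem _ fun j _ => Submodule.smul_mem_smul ?_ trivial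
  have h3 := hrel j
  simp only [Fintype.sum_option, Option.elim] at h3
  have h4 : s * a none j ∈ p.asIdeal := by
    rw [eq_neg_of_add_eq_zero_left h3]
    exact neg_mem (Submodule.sum_mem _ fun i _ => Ideal.mul_mem_right _ _
      (hf ▸ Submodule.subset_span ⟨i, rfl⟩))
  exact (p.2.mem_or_mem h4).resolve_left hs

end Hull


section Cot

theorem coext_A {A : Type u} [CommRing A] {X₁ X₂ X₃ E E' : Type u}
    [AddCommGroup X₁] [Module A X₁] [AddCommGroup X₂] [Module A X₂] [AddCommGroup X₃] [Module A X₃]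
    [AddCommGroup E] [Module A E] [AddCommGroup E'] [Module A E'] [Module.Injective A E']
    [Module.Flat A X₃] (f : X₁ →ₗ[A] X₂) (g : X₂ →ₗ[A] X₃) (hf : Function.Injective f)
    (hg : Function.Surjective g) (hfg : Function.Exact f g) (v : X₁ →ₗ[A] (E →ₗ[A] E')) :
    ∃ w : X₂ →ₗ[A] (E →ₗ[A] E'), w ∘ₗ f = v := by
  have hinj := LinearMap.lTensor_injective_of_exact_of_flat g hg f hf hfg E
  obtain ⟨w, hw⟩ := Module.Injective.extension_property A E' _ _ (f.lTensor E) hinj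
    (TensorProduct.lift v.flip)
  refine ⟨(TensorProduct.curry w).flip, ?_⟩
  ext x e
  have := LinearMap.congr_fun hw (e ⊗ₜ x)
  simpa using this

variable {R A : Type u} [CommRing R] [CommRing A] [Algebra R A]

theorem coext_R {W : Type u} [AddCommGroup W] [Module A W] [Module R W] [IsScalarTower R A W]
    (hW : ∀ (X₁ X₂ X₃ : Type u) [AddCommGroup X₁] [Module A X₁] [AddCommGroup X₂] [Module A X₂]
      [AddCommGroup X₃] [Module A X₃] [Module.Flat A X₃] (f : X₁ →ₗ[A] X₂) (g : X₂ →ₗ[A] X₃),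
      Function.Injective f → Function.Surjective g → Function.Exact f g →
      ∀ v : X₁ →ₗ[A] W, ∃ w : X₂ →ₗ[A] W, w ∘ₗ f = v)
    {X₁ X₂ X₃ : Type u} [AddCommGroup X₁] [Module R X₁] [AddCommGroup X₂] [Module R X₂]
    [AddCommGroup X₃] [Module R X₃] [Module.Flat R X₃] (f : X₁ →ₗ[R] X₂) (g : X₂ →ₗ[R] X₃)
    (hf : Function.Injective f)
    (hg : Function.Surjective g) (hfg : Function.Exact f g) (v : X₁ →ₗ[R] W) :
    ∃ w : X₂ →ₗ[R] W, w ∘ₗ f = v := by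
  obtain ⟨w, hw⟩ := hW (A ⊗[R] X₁) (A ⊗[R] X₂) (A ⊗[R] X₃) (f.baseChange A) (g.baseChange A)
    (LinearMap.lTensor_injective_of_exact_of_flat g hg f hf hfg A)
    (LinearMap.lTensor_surjective A hg) (lTensor_exact A hfg hg) (v.liftBaseChange A)
  refine ⟨(LinearMap.liftBaseChangeEquiv A).symm w, ?_⟩
  ext x
  have := LinearMap.congr_fun hw (1 ⊗ₜ x)
  simpa using this

/-- presentation of a module by a free module -/
theorem flat_ker {F Q : Type u} [AddCommGroup F] [Module R F] [Module.Flat R F]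
    [AddCommGroup Q] [Module R Q] [Module.Flat R Q] (g : Q →ₗ[R] F) (hg : Function.Surjective g) :
    Module.Flat R (LinearMap.ker g) := by
  rw [Module.Flat.iff_rTensor_preserves_injective_linearMap]
  intro N N' _ _ _ _ f hf
  have h1 := LinearMap.lTensor_injective_of_exact_of_flat g hg (LinearMap.ker g).subtype
    (Submodule.subtype_injective _) (LinearMap.exact_subtype_ker_map g) N
  have h2 := Module.Flat.rTensor_preserves_injective_linearMap (M := Q) f hf
  have h3 : (LinearMap.ker g).subtype.lTensor N' ∘ₗ f.rTensor (LinearMap.ker g) =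
      f.rTensor Q ∘ₗ (LinearMap.ker g).subtype.lTensor N := by
    ext; simp
  have h4 := h2.comp h1
  rw [← LinearMap.coe_comp, ← h3, LinearMap.coe_comp] at h4
  exact h4.of_comp

/-- the free cover -/
noncomputable abbrev fcov (R : Type u) [CommRing R] (F : Type u) [AddCommGroup F] [Module R F] :
    (F →₀ R) →ₗ[R] F := Finsupp.linearCombination R id

theorem fcov_surj (F : Type u) [AddCommGroup F] [Module R F] : Function.Surjective (fcov R F) :=
  Finsupp.linearCombination_surjective _ Function.surjective_id

/-- short exact sequences of linear maps -/
structure SES (A B C : Type u) [AddCommGroup A] [Module R A] [AddCommGroup B] [Module R B]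
    [AddCommGroup C] [Module R C] (f : A →ₗ[R] B) (g : B →ₗ[R] C) : Prop where
  inj : Function.Injective f
  surj : Function.Surjective g
  exact : Function.Exact f g

section
variable {A B C : Type u} [AddCommGroup A] [Module R A] [AddCommGroup B] [Module R B]
    [AddCommGroup C] [Module R C] {f : A →ₗ[R] B} {g : B →ₗ[R] C} {X Y : ModuleCat.{u} R}

theorem SES.ses (h : SES A B C f g) : (ShortComplex.mk (ModuleCat.ofHom f) (ModuleCat.ofHom g)
      (by ext x; exact h.exact.apply_apply_eq_zero x)).ShortExact :=
  ses_of f g h.inj h.surj h.exact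

theorem SES.cov1 (h : SES A B C f g) {n : ℕ} (h3 : AV X (ModuleCat.of R C) n)
    (h2 : AV X (ModuleCat.of R B) (n + 1)) : AV X (ModuleCat.of R A) (n + 1) :=
  _root_.cov1 h.ses h3 h2

theorem SES.cov2 (h : SES A B C f g) {n : ℕ} (h1 : AV X (ModuleCat.of R A) n)
    (h3 : AV X (ModuleCat.of R C) n) : AV X (ModuleCat.of R B) n :=
  _root_.cov2 h.ses h1 h3

theorem SES.cov3 (h : SES A B C f g) {n : ℕ} (h2 : AV X (ModuleCat.of R B) n)
    (h1 : AV X (ModuleCat.of R A) (n + 1)) : AV X (ModuleCat.of R C) n :=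
  _root_.cov3 h.ses h2 h1

theorem SES.conShift (h : SES A B C f g) {n : ℕ} (h2 : AV (ModuleCat.of R B) Y n)
    (h2' : AV (ModuleCat.of R B) Y (n + 1)) :
    Nonempty (Abelian.Ext.{u} (ModuleCat.of R C) Y (n + 1) ≃ₗ[R]
      Abelian.Ext.{u} (ModuleCat.of R A) Y n) :=
  _root_.conShift h.ses h2 h2'
end

theorem fcov_ses (F : Type u) [AddCommGroup F] [Module R F] :
    SES (LinearMap.ker (fcov R F)) (F →₀ R) F (LinearMap.ker (fcov R F)).subtype (fcov R F) :=
  ⟨Submodule.subtype_injective _, fcov_surj F, LinearMap.exact_subtype_ker_map _⟩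

theorem av_free (X : Type u) (Y : ModuleCat.{u} R) (i : ℕ) :
    AV (ModuleCat.of R (X →₀ R)) Y (i + 1) := by
  have : Projective (ModuleCat.of R (X →₀ R)) :=
    (IsProjective.iff_projective (R := R) (X →₀ R)).1 inferInstance
  exact av_proj _ _ _

theorem cot_of_ext {W : Type u} [AddCommGroup W] [Module R W]
    (hW : ∀ (X₁ X₂ X₃ : Type u) [AddCommGroup X₁] [Module R X₁] [AddCommGroup X₂] [Module R X₂]
      [AddCommGroup X₃] [Module R X₃] [Module.Flat R X₃] (f : X₁ →ₗ[R] X₂) (g : X₂ →ₗ[R] X₃),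
      Function.Injective f → Function.Surjective g → Function.Exact f g →
      ∀ v : X₁ →ₗ[R] W, ∃ w : X₂ →ₗ[R] W, w ∘ₗ f = v) (i : ℕ) :
    ∀ (F : Type u) [AddCommGroup F] [Module R F] [Module.Flat R F],
      AV (ModuleCat.of R F) (ModuleCat.of R W) (i + 1) := by
  induction i with
  | zero =>
    intro F _ _ _
    refine con1_of_extend (fcov_ses (R := R) F).ses (av_free _ _ 0) fun f => ?_
    obtain ⟨w, hw⟩ := hW _ _ _ (LinearMap.ker (fcov R F)).subtype (fcov R F)
      (Submodule.subtype_injective _) (fcov_surj F) (LinearMap.exact_subtype_ker_map _) f.hom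
    exact ⟨ModuleCat.ofHom w, by ext x; exact LinearMap.congr_fun hw x⟩
  | succ n ih =>
    intro F _ _ _
    have : Module.Flat R (LinearMap.ker (fcov R F)) := flat_ker _ (fcov_surj F)
    obtain ⟨e⟩ := (fcov_ses (R := R) F).conShift (av_free F (ModuleCat.of R W) n) (av_free _ _ (n + 1))
    have h := ih (LinearMap.ker (fcov R F))
    exact e.toEquiv.subsingleton_congr.2 h

variable [IsNoetherianRing A]

theorem PP_cot (T : Set (PrimeSpectrum A)) (G : Type u) [AddCommGroup G] [Module A G]
    [Module R G] [IsScalarTower R A G] [Module.Flat A G] (i : ℕ)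
    (F : Type u) [AddCommGroup F] [Module R F] [Module.Flat R F] :
      AV (ModuleCat.of R F) (ModuleCat.of R (PP T G)) (i + 1) := by
  refine cot_of_ext (fun X₁ X₂ X₃ _ _ _ _ _ _ _ f g hf hg hfg v => ?_) i F
  refine coext_R (A := A) (fun X₁ X₂ X₃ _ _ _ _ _ _ _ f g hf hg hfg v => ?_) f g hf hg hfg v
  have key : ∀ q : T, ∃ w : X₂ →ₗ[A] (HE q.1 →ₗ[A] G ⊗[A] HE q.1),
      w ∘ₗ f = LinearMap.proj q ∘ₗ v := fun q => by
    have : Module.Injective A (G ⊗[A] HE q.1) := injective_tensor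
    exact coext_A f g hf hg hfg _
  choose w hw using key
  refine ⟨LinearMap.pi w, ?_⟩
  ext x q : 2
  exact LinearMap.congr_fun (hw q) x

theorem ses_restrict {G P : Type u} [AddCommGroup G] [Module A G]
    [Module R G] [IsScalarTower R A G] [AddCommGroup P] [Module A P]
    [Module R P] [IsScalarTower R A P] (f : G →ₗ[A] P) (hf : Function.Injective f) :
    SES (R := R) G P (P ⧸ LinearMap.range f)
      (f.restrictScalars R) ((LinearMap.range f).mkQ.restrictScalars R) :=
  ⟨hf, (LinearMap.range f).mkQ_surjective, LinearMap.exact_map_mkQ_range f⟩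

theorem cot_induction (d : ℕ) (hd : ∀ p : PrimeSpectrum A, Order.coheight p ≤ (d : ℕ∞)) (k : ℕ) :
    ∀ (n : ℕ), n + k = d + 1 → ∀ (G : Type u) [AddCommGroup G] [Module A G]
    [Module R G] [IsScalarTower R A G] [Module.Flat A G],
    (∀ p : PrimeSpectrum A, p ∉ {q : PrimeSpectrum A | (n : ℕ∞) ≤ Order.coheight q} →
      p.asIdeal • (⊤ : Submodule A G) = ⊤) → ∀ (F : Type u) [AddCommGroup F] [Module R F]
      [Module.Flat R F] (i : ℕ), k ≤ i → AV (ModuleCat.of R F) (ModuleCat.of R G) i := by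
  induction k with
  | zero =>
    intro n hn G _ _ _ _ _ hG F _ _ _ i hi
    apply av_zero
    refine subsing_of fun g => ?_
    have h0 := detect G _ hG A (g ⊗ₜ[A] (1 : A)) (by
      intro q hq
      exfalso
      have h1 : ((d + 1 : ℕ) : ℕ∞) ≤ d := by
        have : n = d + 1 := by omega
        rw [← this]; exact le_trans hq (hd q)
      have := Nat.cast_le.1 h1
      omega)
    simpa using congrArg (TensorProduct.rid A G) h0
  | succ k ih =>
    intro n hn G _ _ _ _ _ hG F _ _ _ i hi
    obtain ⟨i, rfl⟩ : ∃ j, i = j + 1 := ⟨i - 1, by omega⟩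
    set T := {q : PrimeSpectrum A | (n : ℕ∞) ≤ Order.coheight q} with hT
    have := coker_flat G hG
    have h1 := ih (n + 1) (by omega) (PP T G ⧸ LinearMap.range (iot T G)) (by
      intro p hp
      refine coker_C G hG p fun q hq hpq => ?_
      by_contra hne
      have hlt : p < q := lt_of_le_of_ne hpq (Ne.symm hne)
      apply hp
      have := Order.coheight_add_one_le hlt
      change ((n + 1 : ℕ) : ℕ∞) ≤ _
      push_cast
      exact le_trans (by gcongr; exact hq) this) F i (by omega)
    have h2 := PP_cot (R := R) T G i F
    have hses : SES (R := R) G (PP T G) (PP T G ⧸ LinearMap.range (iot T G))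
      ((iot T G).restrictScalars R) ((LinearMap.range (iot T G)).mkQ.restrictScalars R) :=
      ses_restrict _ (iot_inj G hG)
    exact hses.cov1 h1 h2

theorem cot_dim (d : ℕ) (hd : ∀ p : PrimeSpectrum A, Order.coheight p ≤ (d : ℕ∞))
    (F : Type u) [AddCommGroup F] [Module R F]
      [Module.Flat R F] (i : ℕ) (hi : d + 1 ≤ i) : AV (ModuleCat.of R F) (ModuleCat.of R A) i :=
  cot_induction d hd (d + 1) 0 (by omega) A (fun p hp => absurd (by simp) hp) F i hi

end Cot


section Descent
variable {R : Type u} [CommRing R] [IsNoetherianRing R]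

theorem av_lequiv {X : ModuleCat.{u} R} {n : ℕ} {Y Y' : Type u} [AddCommGroup Y] [Module R Y]
    [AddCommGroup Y'] [Module R Y'] (e : Y ≃ₗ[R] Y') (h : AV X (ModuleCat.of R Y) n) :
    AV X (ModuleCat.of R Y') n := av_iso e.toModuleIso h

theorem filt {X : ModuleCat.{u} R} {n : ℕ} (J : Ideal R)
    (hJ : ∀ p : PrimeSpectrum R, J ≤ p.asIdeal → AV X (ModuleCat.of R (R ⧸ p.asIdeal)) n)
    (T : Type u) [AddCommGroup T] [Module R T] [hT : Module.Finite R T]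
    (hJT : J ≤ Module.annihilator R T) : AV X (ModuleCat.of R T) n := by
  revert hJT
  induction hT using IsNoetherianRing.induction_on_isQuotientEquivQuotientPrime R with
  | subsingleton N => intro _; exact av_zero inferInstance
  | quotient N p e =>
    intro h
    rw [e.annihilator_eq, Ideal.annihilator_quotient] at h
    exact av_lequiv e.symm (hJ p h)
  | exact N₁ N₂ N₃ f g hf hg hfg ih1 ih3 =>
    intro h
    exact (SES.mk hf hg hfg).cov2 (ih1 (h.trans (f.annihilator_le_of_injective hf)))
      (ih3 (h.trans (g.annihilator_le_of_surjective hg)))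

theorem cot_prime (S : Type u) [AddCommGroup S] [Module R S] [Module.Flat R S] (p : Ideal R)
    (d : ℕ) (hd : ringKrullDim (R ⧸ p) ≤ d) (i : ℕ) (hi : d + 1 ≤ i) :
    AV (ModuleCat.of R S) (ModuleCat.of R (R ⧸ p)) i := by
  refine cot_dim (R := R) (A := R ⧸ p) d (fun q => ?_) S i hi
  have h := (Order.coheight_le_krullDim q).trans hd
  exact WithBot.coe_le_coe.1 h

theorem exists_functional (H : Type u) [AddCommGroup H] [Module R H] [Module.Finite R H]
    (q : PrimeSpectrum R) (hq : Module.annihilator R H ≤ q.asIdeal) :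
    ∃ h : H →ₗ[R] R ⧸ q.asIdeal, h ≠ 0 := by
  have hs : q ∈ Module.support R H := by
    rw [Module.support_eq_zeroLocus]; exact hq
  rw [Module.mem_support_iff_nontrivial_residueField_tensorProduct] at hs
  let κ := q.asIdeal.ResidueField
  obtain ⟨z, hz⟩ := exists_ne (0 : κ ⊗[R] H)
  obtain ⟨φ, hφ⟩ := Module.Projective.exists_dual_ne_zero κ hz
  let g : H →ₗ[R] κ := (LinearMap.liftBaseChangeEquiv κ).symm φ
  have hg : g ≠ 0 := by
    intro h0
    apply hφ
    have : φ = LinearMap.liftBaseChangeEquiv κ g := by simp [g]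
    rw [this, h0, map_zero]; rfl
  obtain ⟨r, x, hx⟩ := Module.Finite.exists_fin (R := R) (M := H)
  obtain ⟨⟨b, hbmem⟩, hb⟩ := IsLocalization.exist_integer_multiples_of_finite
    (nonZeroDivisors (R ⧸ q.asIdeal)) (fun k => g (x k))
  obtain ⟨c, rfl⟩ := Ideal.Quotient.mk_surjective b
  let L : (R ⧸ q.asIdeal) →ₗ[R] κ := (IsScalarTower.toAlgHom R (R ⧸ q.asIdeal) κ).toLinearMap
  have hL : Function.Injective L := IsFractionRing.injective (R ⧸ q.asIdeal) κ
  have hc : ∀ y : κ, c • y = algebraMap (R ⧸ q.asIdeal) κ (Ideal.Quotient.mk _ c) * y := by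
    intro y
    rw [Algebra.smul_def, IsScalarTower.algebraMap_apply R (R ⧸ q.asIdeal) κ]
    rfl
  have hrange : ∀ y : H, (c • g) y ∈ LinearMap.range L := by
    intro y
    have hy : y ∈ Submodule.span R (Set.range x) := by rw [hx]; trivial
    have : Submodule.span R (Set.range x) ≤ (LinearMap.range L).comap (c • g) := by
      rw [Submodule.span_le]
      rintro _ ⟨k, rfl⟩
      obtain ⟨a, ha⟩ := hb k
      refine ⟨a, ?_⟩
      rw [LinearMap.smul_apply, hc, ← Algebra.smul_def]
      exact ha
    exact this hy
  refine ⟨(LinearEquiv.ofInjective L hL).symm.toLinearMap ∘ₗ (c • g).codRestrict _ hrange, ?_⟩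
  intro h0
  apply hg
  ext y
  have h1 := LinearMap.congr_fun h0 y
  simp only [LinearMap.comp_apply, LinearEquiv.coe_coe, LinearMap.zero_apply,
    LinearEquiv.map_eq_zero_iff] at h1
  have h2 : c • g y = 0 := congrArg Subtype.val h1
  rw [hc] at h2
  refine (mul_eq_zero.1 h2).resolve_left fun h3 => ?_
  have h4 : Ideal.Quotient.mk q.asIdeal c = 0 := hL (h3.trans (map_zero L).symm)
  exact nonZeroDivisors.ne_zero hbmem h4

theorem smul_top_of_gen (S : ModuleCat.{u} R) (H : Type u) [AddCommGroup H] [Module R H]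
    [Module.Finite R H] (m : Ideal R) (i : ℕ)
    (h1 : AV S (ModuleCat.of R (H ⧸ m • (⊤ : Submodule R H))) i)
    (h2 : ∀ (T : Type u) [AddCommGroup T] [Module R T] [Module.Finite R T],
      Module.annihilator R H ≤ Module.annihilator R T → AV S (ModuleCat.of R T) (i + 1)) :
    m • (⊤ : Submodule R (Abelian.Ext.{u} S (ModuleCat.of R H) i)) = ⊤ := by
  obtain ⟨r, f, hf⟩ := Submodule.fg_iff_exists_fin_generating_family.1 (IsNoetherian.noetherian m)
  let w : (Fin r → H) →ₗ[R] H := ∑ k, f k • LinearMap.proj k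
  have hw : LinearMap.range w = m • (⊤ : Submodule R H) := by
    ext y
    rw [mem_smul_top_of_gen hf]
    simp only [w, LinearMap.mem_range, LinearMap.sum_apply, LinearMap.smul_apply,
      LinearMap.proj_apply, eq_comm]
  rw [← hw] at h1
  rw [eq_top_iff]
  rintro x -
  have s1 : SES (LinearMap.range w) H (H ⧸ LinearMap.range w) (LinearMap.range w).subtype
    (LinearMap.range w).mkQ := ⟨Submodule.subtype_injective _, Submodule.mkQ_surjective _,
      LinearMap.exact_subtype_mkQ _⟩
  have s2 : SES (LinearMap.ker w) (Fin r → H) (LinearMap.range w) (LinearMap.ker w).subtype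
    w.rangeRestrict := ⟨Submodule.subtype_injective _, w.surjective_rangeRestrict, by
      intro x; simp [LinearMap.rangeRestrict, Subtype.ext_iff]⟩
  have h3 : AV S (ModuleCat.of R (LinearMap.ker w)) (i + 1) := h2 _ (by
    refine le_trans ?_ ((LinearMap.ker w).subtype.annihilator_le_of_injective
      (Submodule.subtype_injective _))
    intro c hc
    rw [Module.mem_annihilator] at hc ⊢
    intro x; ext k; exact hc _)
  obtain ⟨y, rfl⟩ := Abelian.Ext.covariant_sequence_exact₂ S s1.ses x (Subsingleton.elim (h := h1) _ _)
  obtain ⟨z, rfl⟩ := Abelian.Ext.covariant_sequence_exact₃ S s2.ses y rfl (Subsingleton.elim (h := h3) _ _)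
  have key : (z.comp (Abelian.Ext.mk₀ (ModuleCat.ofHom w.rangeRestrict)) (add_zero i)).comp
      (Abelian.Ext.mk₀ (ModuleCat.ofHom (LinearMap.range w).subtype)) (add_zero i) =
      ∑ k, f k • z.comp (Abelian.Ext.mk₀ (ModuleCat.ofHom
        (LinearMap.proj k : (Fin r → H) →ₗ[R] H))) (add_zero i) := by
    rw [Abelian.Ext.comp_assoc_of_second_deg_zero, Abelian.Ext.mk₀_comp_mk₀]
    have : ModuleCat.ofHom w.rangeRestrict ≫ ModuleCat.ofHom (LinearMap.range w).subtype =
      ∑ k, f k • ModuleCat.ofHom (LinearMap.proj k : (Fin r → H) →ₗ[R] H) := by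
      ext x
      simp [w, ModuleCat.hom_sum]
    rw [this, Abelian.Ext.mk₀_sum, Abelian.Ext.comp_sum]
    simp only [Abelian.Ext.mk₀_smul, Abelian.Ext.comp_smul]
  erw [key]
  exact Submodule.sum_mem _ fun k _ => Submodule.smul_mem_smul
    (hf ▸ Submodule.subset_span ⟨k, rfl⟩) trivial

theorem descent [IsLocalRing R] (S : Type u) [AddCommGroup S] [Module R S] [Module.Flat R S]
    (H : Type u) [AddCommGroup H] [Module R H] [Module.Finite R H] (d : ℕ)
    (hbase : ∀ p : PrimeSpectrum R, Module.annihilator R H ≤ p.asIdeal → ∀ i, d + 1 ≤ i →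
      AV (ModuleCat.of R S) (ModuleCat.of R (R ⧸ p.asIdeal)) i)
    (hnak : ∀ i, 1 ≤ i → i ≤ d → AV (ModuleCat.of R S) (ModuleCat.of R H) i ∨
      IsLocalRing.maximalIdeal R •
        (⊤ : Submodule R (Abelian.Ext.{u} (ModuleCat.of R S) (ModuleCat.of R H) i)) ≠ ⊤) :
    ∀ i, 1 ≤ i → AV (ModuleCat.of R S) (ModuleCat.of R H) i := by
  have main : ∀ (k i : ℕ), 1 ≤ i → d + 1 ≤ i + k → 
      ∀ p : PrimeSpectrum R, Module.annihilator R H ≤ p.asIdeal →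
      AV (ModuleCat.of R S) (ModuleCat.of R (R ⧸ p.asIdeal)) i := by
    intro k
    induction k with
    | zero => intro i _ hi p hp; exact hbase p hp i hi
    | succ k ih =>
      intro i hi1 hik
      by_cases hid : d + 1 ≤ i
      · intro p hp; exact hbase p hp i hid
      have h2 : ∀ (T : Type u) [AddCommGroup T] [Module R T] [Module.Finite R T],
          Module.annihilator R H ≤ Module.annihilator R T →
          AV (ModuleCat.of R S) (ModuleCat.of R T) (i + 1) := fun T _ _ _ hT =>
        filt _ (ih (i + 1) (by omega) (by omega)) T hT
      have hH : AV (ModuleCat.of R S) (ModuleCat.of R H) i := by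
        refine (hnak i hi1 (by omega)).resolve_right (not_not.2 ?_)
        refine smul_top_of_gen _ H _ i ?_ h2
        refine filt (IsLocalRing.maximalIdeal R) (fun p hp => ?_) _ ?_
        · have hpm : p.asIdeal = IsLocalRing.maximalIdeal R :=
            ((IsLocalRing.maximalIdeal.isMaximal R).eq_of_le p.2.ne_top hp).symm
          refine cot_prime S _ 0 ?_ i (by omega)
          rw [hpm]
          have := ringKrullDim_eq_zero_of_field (IsLocalRing.ResidueField R)
          exact this.le
        · intro c hc
          rw [Module.mem_annihilator]
          intro x
          obtain ⟨x, rfl⟩ := Submodule.mkQ_surjective _ x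
          rw [← map_smul, Submodule.mkQ_apply, Submodule.Quotient.mk_eq_zero]
          exact Submodule.smul_mem_smul hc trivial
      have wf : WellFounded ((· > ·) : Ideal R → Ideal R → Prop) := wellFounded_gt
      have claim : ∀ I : Ideal R, ∀ p : PrimeSpectrum R, p.asIdeal = I →
          Module.annihilator R H ≤ p.asIdeal →
          AV (ModuleCat.of R S) (ModuleCat.of R (R ⧸ p.asIdeal)) i := by
        intro I
        induction I using wf.induction with
        | h I IH =>
          rintro q rfl hq
          obtain ⟨h, hh0⟩ := exists_functional H q hq
          have s1 : SES (LinearMap.ker h) H (LinearMap.range h) (LinearMap.ker h).subtype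
            h.rangeRestrict := ⟨Submodule.subtype_injective _, h.surjective_rangeRestrict, by
              intro x; simp [LinearMap.rangeRestrict, Subtype.ext_iff]⟩
          have a1 : AV (ModuleCat.of R S) (ModuleCat.of R (LinearMap.range h)) i :=
            s1.cov3 hH (h2 _ ((LinearMap.ker h).subtype.annihilator_le_of_injective
              (Submodule.subtype_injective _)))
          have s2 : SES (LinearMap.range h) (R ⧸ q.asIdeal) ((R ⧸ q.asIdeal) ⧸ LinearMap.range h)
            (LinearMap.range h).subtype (LinearMap.range h).mkQ :=
            ⟨Submodule.subtype_injective _, Submodule.mkQ_surjective _,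
              LinearMap.exact_subtype_mkQ _⟩
          refine s2.cov2 a1 ?_
          refine filt (Module.annihilator R ((R ⧸ q.asIdeal) ⧸ LinearMap.range h))
            (fun p hp => ?_) _ le_rfl
          have hqp : q.asIdeal ≤ p.asIdeal := by
            refine le_trans ?_ hp
            refine le_trans ?_ (LinearMap.annihilator_le_of_surjective (LinearMap.range h).mkQ
              (Submodule.mkQ_surjective _))
            rw [Ideal.annihilator_quotient]
          have hne : ¬ p.asIdeal ≤ q.asIdeal := by
            intro hle
            apply hh0
            ext x
            obtain ⟨c, hc⟩ := Ideal.Quotient.mk_surjective (h x)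
            have : c ∈ Module.annihilator R ((R ⧸ q.asIdeal) ⧸ LinearMap.range h) := by
              rw [Module.mem_annihilator]
              intro y
              obtain ⟨y, rfl⟩ := Submodule.mkQ_surjective _ y
              rw [← map_smul, Submodule.mkQ_apply, Submodule.Quotient.mk_eq_zero]
              obtain ⟨b, rfl⟩ := Ideal.Quotient.mk_surjective y
              refine ⟨b • x, ?_⟩
              rw [map_smul, ← hc, Algebra.smul_def, Algebra.smul_def]
              exact mul_comm _ _
            rw [← hc, Ideal.Quotient.eq_zero_iff_mem.2 (hle (hp this))]
            rfl
          exact IH p.asIdeal (lt_of_le_not_ge hqp hne) p rfl (hq.trans hqp)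
      intro p hp
      exact claim _ p rfl hp
  intro i hi
  exact filt _ (main (d + 1) i hi (by omega)) H le_rfl

end Descent


section Reduction

variable {R : Type u} [CommRing R]

theorem SES.con1' {A B C : Type u} [AddCommGroup A] [Module R A] [AddCommGroup B] [Module R B]
    [AddCommGroup C] [Module R C] {f : A →ₗ[R] B} {g : B →ₗ[R] C} (h : SES A B C f g)
    (W : Type u) [AddCommGroup W] [Module R W]
    (h2 : AV (ModuleCat.of R B) (ModuleCat.of R W) 1) :
    Nonempty (Abelian.Ext.{u} (ModuleCat.of R C) (ModuleCat.of R W) 1 ≃ₗ[R]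
      (A →ₗ[R] W) ⧸ LinearMap.range (LinearMap.lcomp R W f)) := by
  obtain ⟨e⟩ := _root_.con1 h.ses h2
  refine ⟨e.trans (Submodule.Quotient.equiv _ _
    (ModuleCat.homLinearEquiv (S := R) (M := ModuleCat.of R A) (N := ModuleCat.of R W)) ?_)⟩
  ext v
  constructor
  · rintro ⟨_, ⟨w, rfl⟩, rfl⟩
    exact ⟨w.hom, rfl⟩
  · rintro ⟨w, rfl⟩
    exact ⟨_, ⟨ModuleCat.ofHom w, rfl⟩, rfl⟩

theorem av_free' (X : Type u) [AddCommGroup X] [Module R X] [Module.Free R X]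
    (Y : ModuleCat.{u} R) (i : ℕ) :
    AV (ModuleCat.of R X) Y (i + 1) := by
  have : Projective (ModuleCat.of R X) :=
    (IsProjective.iff_projective (R := R) X).1 inferInstance
  exact av_proj _ _ _

theorem finsupp_ses (X : Type u) {A B C : Type u} [AddCommGroup A] [Module R A] [AddCommGroup B]
    [Module R B] [AddCommGroup C] [Module R C] {f : A →ₗ[R] B} {g : B →ₗ[R] C}
    (h : SES A B C f g) : SES (X →₀ A) (X →₀ B) (X →₀ C)
      (Finsupp.mapRange.linearMap f) (Finsupp.mapRange.linearMap g) := by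
  refine ⟨?_, ?_, ?_⟩
  · intro a b hab
    ext x
    exact h.inj (DFunLike.congr_fun hab x)
  · exact Finsupp.mapRange_surjective g (map_zero g) h.surj
  · intro y
    constructor
    · intro hy
      have h1 : ∀ x, ∃ a, f a = y x := fun x => (h.exact (y x)).1 (DFunLike.congr_fun hy x)
      choose a ha using h1
      refine ⟨Finsupp.onFinset y.support a ?_, ?_⟩
      · intro x hx
        rw [Finsupp.mem_support_iff]
        intro h0
        apply hx
        apply h.inj
        rw [ha, h0, map_zero]
      · ext x
        exact ha x
    · rintro ⟨a, rfl⟩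
      ext x
      exact h.exact.apply_apply_eq_zero (a x)

theorem av_finsupp (N : Type u) [AddCommGroup N] [Module R N] (X : Type u) (i : ℕ) :
    ∀ (M : Type u) [AddCommGroup M] [Module R M],
    AV (ModuleCat.of R M) (ModuleCat.of R N) (i + 1) →
    AV (ModuleCat.of R (X →₀ M)) (ModuleCat.of R N) (i + 1) := by
  induction i with
  | zero =>
    intro M _ _ hM
    have s := fcov_ses (R := R) M
    refine con1_of_extend (finsupp_ses X s).ses (av_free' _ _ _) ?_
    intro v
    have h1 : ∀ x : X, ∃ w : (M →₀ R) →ₗ[R] N,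
        ∀ a, w ((LinearMap.ker (fcov R M)).subtype a) = v.hom (Finsupp.single x a) := by
      intro x
      obtain ⟨w, hw⟩ := extend_of_con1 s.ses hM
        (ModuleCat.ofHom (v.hom ∘ₗ Finsupp.lsingle x))
      exact ⟨w.hom, fun a => LinearMap.congr_fun (congrArg ModuleCat.Hom.hom hw) a⟩
    choose w hw using h1
    refine ⟨ModuleCat.ofHom (Finsupp.lsum R w), ?_⟩
    apply ModuleCat.hom_ext
    apply Finsupp.lhom_ext
    intro x a
    refine Eq.trans ?_ (hw x a)
    change Finsupp.lsum R w (Finsupp.mapRange.linearMap _ (Finsupp.single x a)) = _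
    rw [Finsupp.mapRange.linearMap_apply, Finsupp.mapRange_single, Finsupp.lsum_single]
  | succ i ih =>
    intro M _ _ hM
    have s := fcov_ses (R := R) M
    obtain ⟨e1⟩ := s.conShift (Y := ModuleCat.of R N) (av_free' _ _ i) (av_free' _ _ (i + 1))
    obtain ⟨e2⟩ := (finsupp_ses X s).conShift (Y := ModuleCat.of R N)
      (av_free' _ _ i) (av_free' _ _ (i + 1))
    have h1 : AV (ModuleCat.of R (LinearMap.ker (fcov R M))) (ModuleCat.of R N) (i + 1) :=
      e1.symm.toEquiv.subsingleton
    have h2 := ih _ h1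
    exact e2.toEquiv.subsingleton

theorem rTensor_ses (M : Type u) [AddCommGroup M] [Module R M]
    {A B C : Type u} [AddCommGroup A] [Module R A] [AddCommGroup B]
    [Module R B] [AddCommGroup C] [Module R C] [Module.Flat R C] {f : A →ₗ[R] B} {g : B →ₗ[R] C}
    (h : SES A B C f g) : SES (A ⊗[R] M) (B ⊗[R] M) (C ⊗[R] M) (f.rTensor M) (g.rTensor M) := by
  refine ⟨?_, LinearMap.rTensor_surjective M h.surj, rTensor_exact M h.exact h.surj⟩
  have h1 := LinearMap.lTensor_injective_of_exact_of_flat g h.surj f h.inj h.exact M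
  rwa [LinearMap.lTensor_inj_iff_rTensor_inj] at h1

theorem exists_cover (F : Type u) [AddCommGroup F] [Module R F] [Module.Flat R F] :
    ∃ (K : Type u) (_ : AddCommGroup K) (_ : Module R K) (f : K →ₗ[R] (F →₀ R)),
      SES K (F →₀ R) F f (fcov R F) ∧ Module.Flat R K :=
  ⟨LinearMap.ker (fcov R F), inferInstance, inferInstance, _, fcov_ses F,
    flat_ker _ (fcov_surj F)⟩

theorem reduction (M N : Type u) [AddCommGroup M] [Module R M] [AddCommGroup N] [Module R N]
    (hMN : ∀ i : ℕ, AV (ModuleCat.of R M) (ModuleCat.of R N) (i + 1)) (i : ℕ) :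
    ∀ (F : Type u) [AddCommGroup F] [Module R F] [Module.Flat R F],
    Nonempty (Abelian.Ext.{u} (ModuleCat.of R (F ⊗[R] M)) (ModuleCat.of R N) (i + 1) ≃ₗ[R]
      Abelian.Ext.{u} (ModuleCat.of R F) (ModuleCat.of R (M →ₗ[R] N)) (i + 1)) := by
  have hQ : ∀ (X : Type u) (i : ℕ),
      AV (ModuleCat.of R ((X →₀ R) ⊗[R] M)) (ModuleCat.of R N) (i + 1) := by
    classical
    intro X i
    exact av_iso_left (TensorProduct.finsuppScalarLeft R M X).symm.toModuleIso
      (av_finsupp N X i M (hMN i))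
  induction i with
  | zero =>
    intro F _ _ _
    obtain ⟨K, _, _, f, s, _⟩ := exists_cover (R := R) F
    have t := rTensor_ses M s
    obtain ⟨e1⟩ := s.con1' (M →ₗ[R] N) (av_free' _ _ 0)
    obtain ⟨e2⟩ := t.con1' N (hQ F 0)
    have hm : Submodule.map (TensorProduct.lift.equiv (RingHom.id R) K M N).toLinearMap
        (LinearMap.range (LinearMap.lcomp R (M →ₗ[R] N) f)) =
        LinearMap.range (LinearMap.lcomp R N (f.rTensor M)) := ?_
    · exact ⟨e2.trans ((Submodule.Quotient.equiv _ _
        (TensorProduct.lift.equiv (RingHom.id R) K M N) hm).symm.trans e1.symm)⟩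
    ext v
    constructor
    · rintro ⟨_, ⟨w, rfl⟩, rfl⟩
      refine ⟨TensorProduct.lift.equiv (RingHom.id R) (F →₀ R) M N w, ?_⟩
      apply TensorProduct.ext'
      intro a m
      rfl
    · rintro ⟨w, rfl⟩
      refine ⟨_, ⟨TensorProduct.curry w, rfl⟩, ?_⟩
      apply TensorProduct.ext'
      intro a m
      rfl
  | succ i ih =>
    intro F _ _ _
    obtain ⟨K, _, _, f, s, _⟩ := exists_cover (R := R) F
    have t := rTensor_ses M s
    obtain ⟨e1⟩ := s.conShift (Y := ModuleCat.of R (M →ₗ[R] N)) (av_free' _ _ i)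
      (av_free' _ _ (i + 1))
    obtain ⟨e2⟩ := t.conShift (Y := ModuleCat.of R N) (hQ F i) (hQ F (i + 1))
    obtain ⟨e⟩ := ih K
    exact ⟨e2.trans (e.trans e1.symm)⟩

theorem exists_dim [IsNoetherianRing R] [IsLocalRing R] (I : Ideal R) :
    ∃ d : ℕ, ringKrullDim (R ⧸ I) ≤ d ∧
      ∀ i : ℕ, 1 ≤ i → i ≤ d → ((i : ℕ∞) : WithBot ℕ∞) ≤ ringKrullDim (R ⧸ I) := by
  have hlt : ringKrullDim (R ⧸ I) < ⊤ :=
    lt_of_le_of_lt (ringKrullDim_le_of_surjective _ (Ideal.Quotient.mk_surjective (I := I)))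
      ringKrullDim_lt_top
  generalize ringKrullDim (R ⧸ I) = D at hlt
  induction D with
  | bot => exact ⟨0, bot_le, fun i h1 h2 => by omega⟩
  | coe D =>
    induction D with
    | top => exact absurd hlt (lt_irrefl _)
    | coe D =>
      refine ⟨D, le_rfl, fun i _ h2 => ?_⟩
      exact_mod_cast h2

theorem smul_top_ne_of_equiv {E E' : Type*} [AddCommGroup E] [Module R E] [AddCommGroup E']
    [Module R E'] (e : E ≃ₗ[R] E') (m : Ideal R) (h : m • (⊤ : Submodule R E) ≠ ⊤) :
    m • (⊤ : Submodule R E') ≠ ⊤ := by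
  intro h'
  apply h
  have := congrArg (Submodule.map e.symm.toLinearMap) h'
  rwa [Submodule.map_smul'', Submodule.map_top, LinearEquiv.range] at this

end Reduction

/-- Let `φ : (R, m) → (S, n)` be a flat local homomorphism of commutative Noetherian local
rings such that `R/m → S/mS` is an isomorphism, and let `M`, `N` be finitely generated
`R`-modules with `Ext^i_R(M, N) = 0` for all `i ≥ 1`. If for each `i` with
`1 ≤ i ≤ dim_R(N)` the module `Ext^i_R(S ⊗_R M, N)` is in `NAK(R)` (it is zero or
`m · Ext^i_R(S ⊗_R M, N) ≠ Ext^i_R(S ⊗_R M, N)`), then `Ext^i_R(S ⊗_R M, N) = 0` for all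
`i ≥ 1`. -/
theorem ext_baseChange_vanishing_of_nak
    (R S : Type u) [CommRing R] [CommRing S] [IsLocalRing R] [IsLocalRing S]
    [IsNoetherianRing R] [IsNoetherianRing S] [Algebra R S] [Module.Flat R S]
    [IsLocalHom (algebraMap R S)]
    (hres : Function.Bijective
      (Ideal.quotientMap ((IsLocalRing.maximalIdeal R).map (algebraMap R S)) (algebraMap R S)
        Ideal.le_comap_map))
    (M N : Type u) [AddCommGroup M] [Module R M] [Module.Finite R M]
    [AddCommGroup N] [Module R N] [Module.Finite R N]
    (hvanish : ∀ i : ℕ, 1 ≤ i → Subsingleton (extModule R M N i))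
    (hnak : ∀ i : ℕ, 1 ≤ i →
      ((i : ℕ∞) : WithBot ℕ∞) ≤ ringKrullDim (R ⧸ Module.annihilator R N) →
      (Subsingleton (extModule R (S ⊗[R] M) N i) ∨
        (IsLocalRing.maximalIdeal R) • (⊤ : Submodule R (extModule R (S ⊗[R] M) N i)) ≠ ⊤)) :
    ∀ i : ℕ, 1 ≤ i → Subsingleton (extModule R (S ⊗[R] M) N i) := by
  have hMN : ∀ i : ℕ, AV (ModuleCat.of R M) (ModuleCat.of R N) (i + 1) := by
    intro i
    obtain ⟨e⟩ := bridge R (ModuleCat.of R M) (ModuleCat.of R N) i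
    exact @Equiv.subsingleton _ _ e.symm.toEquiv (hvanish (i + 1) (by omega))
  have key : ∀ i : ℕ, Nonempty (extModule R (S ⊗[R] M) N (i + 1) ≃ₗ[R]
      Abelian.Ext.{u} (ModuleCat.of R S) (ModuleCat.of R (M →ₗ[R] N)) (i + 1)) := by
    intro i
    obtain ⟨e⟩ := bridge R (ModuleCat.of R (S ⊗[R] M)) (ModuleCat.of R N) i
    obtain ⟨e'⟩ := reduction M N hMN i S
    exact ⟨e.trans e'⟩
  have hann : Module.annihilator R N ≤ Module.annihilator R (M →ₗ[R] N) := by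
    intro c hc
    rw [Module.mem_annihilator] at hc ⊢
    intro f
    ext x
    exact hc _
  obtain ⟨d, hd, hd'⟩ := exists_dim (Module.annihilator R N)
  have main := descent S (M →ₗ[R] N) d
    (fun p hp i hi => by
      have hle := hann.trans hp
      refine cot_prime S p.asIdeal d (le_trans ?_ hd) i hi
      exact ringKrullDim_le_of_surjective (Ideal.Quotient.factor hle)
        (Ideal.Quotient.factor_surjective hle))
    (fun i h1 h2 => by
      obtain ⟨i, rfl⟩ := Nat.exists_eq_add_of_le' h1
      obtain ⟨e⟩ := key i
      rcases hnak (i + 1) h1 (hd' _ h1 h2) with h | h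
      · exact Or.inl e.symm.toEquiv.subsingleton
      · exact Or.inr (smul_top_ne_of_equiv e _ h))
  intro i h1
  obtain ⟨i, rfl⟩ := Nat.exists_eq_add_of_le' h1
  obtain ⟨e⟩ := key i
  have := main (i + 1) h1
  exact e.toEquiv.subsingleton
end

section
/- Let φ : R → S be a ring homomorphism between commutative Noetherian rings making S flat as an R-module, and let M and N be R-modules with M finitely generated. If Ext^i_R(M,N) = 0 for all i ≥ 1, then for every i ≥ 0 there is an isomorphism of R-modules Ext^i_R(S ⊗_R M, N) ≅ Ext^i_R(S, Hom_R(M,N)). -/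
universe u

open CategoryTheory TensorProduct

section
variable {R : Type u} [CommRing R]

lemma linearEquiv_of_surj {A B H : Type*} [AddCommGroup A] [Module R A] [AddCommGroup B]
    [Module R B] [AddCommGroup H] [Module R H] (f : H →ₗ[R] A) (g : H →ₗ[R] B)
    (hf : Function.Surjective f) (hg : Function.Surjective g)
    (h : ∀ x, f x = 0 ↔ g x = 0) : Nonempty (A ≃ₗ[R] B) := by
  have hk : LinearMap.ker f = LinearMap.ker g := by
    ext x; simpa using h x
  exact ⟨(f.quotKerEquivOfSurjective hf).symm ≪≫ₗ Submodule.quotEquivOfEq _ _ hk ≪≫ₗ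
    (g.quotKerEquivOfSurjective hg)⟩

lemma compare_zero (M N : ModuleCat.{u} R) :
    Nonempty (((Ext R (ModuleCat.{u} R) 0).obj (Opposite.op M)).obj N ≃ₗ[R]
      Abelian.Ext.{u} M N 0) := by
  have : Limits.PreservesFiniteLimits ((linearYoneda R (ModuleCat.{u} R)).obj N) := by
    have : Limits.PreservesFiniteLimits
      ((linearYoneda R (ModuleCat.{u} R)).obj N ⋙ forget _) := by
      change Limits.PreservesFiniteLimits (yoneda.obj N)
      infer_instance
    exact Limits.preservesFiniteLimits_of_reflects_of_preserves _ (forget _)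
  have : Limits.PreservesFiniteColimits ((linearYoneda R (ModuleCat.{u} R)).obj N).rightOp := 
    Limits.preservesFiniteColimits_rightOp _
  let e := ((((linearYoneda R (ModuleCat.{u} R)).obj N).rightOp.leftDerivedZeroIsoSelf).app M).unop
  exact ⟨e.symm.toLinearEquiv ≪≫ₗ (Abelian.Ext.linearEquiv₀ (R := R)).symm⟩

lemma smul_extMk {X Y : ModuleCat.{u} R} (P : ProjectiveResolution X) {n : ℕ} (r : R)
    (f : P.complex.X n ⟶ Y) (m : ℕ) (hm : n + 1 = m)
    (hf : P.complex.d m n ≫ f = 0) :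
    P.extMk (r • f) m hm (by simp [hf]) = r • P.extMk f m hm hf := by
  rw [Abelian.Ext.smul_eq_comp_mk₀, P.extMk_comp_mk₀]
  congr 1

lemma compare_succ (M N : ModuleCat.{u} R) (n : ℕ) :
    Nonempty (((Ext R (ModuleCat.{u} R) (n+1)).obj (Opposite.op M)).obj N ≃ₗ[R]
      Abelian.Ext.{u} M N (n+1)) := by
  let P := projectiveResolution M
  let D := P.complex.linearYonedaObj R N
  let T := D.sc' n (n+1) (n+2)
  let e1 := P.isoExt (R := R) (n+1) N
  let e2 : D.homology (n+1) ≅ T.homology :=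
    ShortComplex.homologyMapIso (D.isoSc' n (n+1) (n+2) (by simp) (by simp))
  let e3 := T.moduleCatHomologyIso
  let e := (e1 ≪≫ e2 ≪≫ e3).toLinearEquiv
  let φ : LinearMap.ker T.g.hom →ₗ[R] Abelian.Ext.{u} M N (n+1) :=
    { toFun := fun x => P.extMk (n := n+1) (Y := N) x.1 (n+2) rfl x.2
      map_add' := fun x y => (P.add_extMk (n := n+1) (Y := N) x.1 y.1 (n+2) rfl x.2 y.2).symm
      map_smul' := fun r x => smul_extMk P r x.1 (n+2) rfl x.2 }
  have hφ : Function.Surjective φ := by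
    intro y
    obtain ⟨f, hf, h⟩ := P.extMk_surjective y (n+2) rfl
    exact ⟨⟨f, hf⟩, h⟩
  obtain ⟨e'⟩ := linearEquiv_of_surj (LinearMap.range T.moduleCatToCycles).mkQ φ
    (Submodule.mkQ_surjective _) hφ (by
      intro x
      rw [Submodule.mkQ_apply, Submodule.Quotient.mk_eq_zero]
      refine Iff.trans ?_ (P.extMk_eq_zero_iff (n := n+1) (Y := N) x.1 (n+2) rfl x.2 n rfl).symm
      constructor
      · rintro ⟨g, hg⟩
        exact ⟨g, congrArg Subtype.val hg⟩
      · rintro ⟨g, hg⟩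
        exact ⟨g, Subtype.ext hg⟩)
  exact ⟨e ≪≫ₗ e'⟩

lemma compare (M N : Type u) [AddCommGroup M]
    [Module R M] [AddCommGroup N] [Module R N] (n : ℕ) :
    Nonempty (extModule R M N n ≃ₗ[R]
      Abelian.Ext.{u} (ModuleCat.of R M) (ModuleCat.of R N) n) := by
  cases n with
  | zero => exact compare_zero _ _
  | succ n => exact compare_succ _ _ n

open Abelian in
lemma exists_les {A B C : Type u} [AddCommGroup A] [Module R A] [AddCommGroup B]
    [Module R B] [AddCommGroup C] [Module R C] (f : A →ₗ[R] B) (g : B →ₗ[R] C)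
    (hf : Function.Injective f) (hfg : Function.Exact f g) (hg : Function.Surjective g)
    (X : Type u) [AddCommGroup X] [Module R X] :
    ∃ δ : ∀ n : ℕ, Abelian.Ext.{u} (ModuleCat.of R X) (ModuleCat.of R C) n →ₗ[R]
        Abelian.Ext.{u} (ModuleCat.of R X) (ModuleCat.of R A) (n + 1),
      (∀ n, Subsingleton (Abelian.Ext.{u} (ModuleCat.of R X) (ModuleCat.of R B) (n + 1)) →
        Function.Surjective (δ n)) ∧
      (∀ n, Subsingleton (Abelian.Ext.{u} (ModuleCat.of R X) (ModuleCat.of R B) n) →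
        Function.Injective (δ n)) ∧
      (∀ φ : X →ₗ[R] C, δ 0 (Abelian.Ext.mk₀ (ModuleCat.ofHom φ)) = 0 ↔
        ∃ ψ : X →ₗ[R] B, g ∘ₗ ψ = φ) := by
  let T : ShortComplex (ModuleCat.{u} R) := ShortComplex.mk (ModuleCat.ofHom f)
    (ModuleCat.ofHom g) (by ext x; exact hfg.apply_apply_eq_zero x)
  have hT : T.ShortExact :=
    { exact := (ShortComplex.ShortExact.moduleCat_exact_iff_function_exact T).2 hfg
      mono_f := (ModuleCat.mono_iff_injective _).2 hf
      epi_g := (ModuleCat.epi_iff_surjective _).2 hg }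
  refine ⟨fun n => hT.extClass.postcompOfLinear R (ModuleCat.of R X) rfl, ?_, ?_, ?_⟩
  · intro n hn x
    exact Ext.covariant_sequence_exact₁ (ModuleCat.of R X) hT x (Subsingleton.elim _ _) rfl
  · intro n hn
    rw [injective_iff_map_eq_zero]
    intro x hx
    obtain ⟨y, rfl⟩ := Ext.covariant_sequence_exact₃ (ModuleCat.of R X) hT x rfl hx
    rw [Subsingleton.elim y 0, Ext.zero_comp]
  · intro φ
    constructor
    · intro h
      obtain ⟨y, hy⟩ := Ext.covariant_sequence_exact₃ (ModuleCat.of R X) hT _ rfl h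
      obtain ⟨y, rfl⟩ := (Ext.mk₀_bijective _ _).2 y
      rw [Ext.mk₀_comp_mk₀] at hy
      have := (Ext.mk₀_bijective _ _).1 hy
      exact ⟨y.hom, congrArg ModuleCat.Hom.hom this⟩
    · rintro ⟨ψ, rfl⟩
      change (Ext.mk₀ (ModuleCat.ofHom ψ ≫ T.g)).comp hT.extClass rfl = 0
      rw [← Ext.mk₀_comp_mk₀, Ext.comp_assoc_of_second_deg_zero, hT.comp_extClass, Ext.comp_zero]

lemma hom_extend (I : Type u) [AddCommGroup I] [Module R I] [Module.Injective R I]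
    {A B : Type u} [AddCommGroup A] [Module R A] [AddCommGroup B] [Module R B]
    (f : A →ₗ[R] B) (hf : Function.Injective f) (g : A →ₗ[R] I) :
    ∃ h : B →ₗ[R] I, h ∘ₗ f = g := by
  obtain ⟨h, hh⟩ := Module.Injective.out f hf g
  exact ⟨h, LinearMap.ext hh⟩

/-- If `F` is flat and `I` injective, then `Hom(F, I)` is injective. -/
lemma injective_hom_of_flat (F I : Type u) [AddCommGroup F] [Module R F] [Module.Flat R F]
    [AddCommGroup I] [Module R I] [Module.Injective R I] :
    Module.Injective R (F →ₗ[R] I) := by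
  refine ⟨fun X Y _ _ _ _ f hf g => ?_⟩
  obtain ⟨h, hh⟩ := hom_extend I (f.rTensor F)
    (Module.Flat.rTensor_preserves_injective_linearMap f hf) (TensorProduct.lift g)
  refine ⟨TensorProduct.curry h, fun x => ?_⟩
  ext y
  simpa using LinearMap.congr_fun hh (x ⊗ₜ y)

lemma exact_lcomp_ker {F M : Type u} [AddCommGroup F] [Module R F] [AddCommGroup M] [Module R M]
    (p : F →ₗ[R] M) (hp : Function.Surjective p) (I : Type u) [AddCommGroup I] [Module R I] :
    Function.Exact (p.lcomp R I) ((LinearMap.ker p).subtype.lcomp R I) :=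
  LinearMap.exact_lcomp_of_exact_of_surjective I p.exact_subtype_ker_map hp

/-- If `S` is flat and `I` injective, then `Ext^{≥1}(S, Hom(M, I)) = 0`. -/
lemma ext_hom_injective (S I : Type u) [AddCommGroup S] [Module R S] [Module.Flat R S]
    [AddCommGroup I] [Module R I] [Module.Injective R I] (n : ℕ) :
    ∀ (M : Type u) [AddCommGroup M] [Module R M],
      Subsingleton (Abelian.Ext.{u} (ModuleCat.of R S) (ModuleCat.of R (M →ₗ[R] I)) (n + 1)) := by
  induction n with
  | zero =>
    intro M _ _
    let p : (M →₀ R) →ₗ[R] M := Finsupp.linearCombination R id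
    have hp : Function.Surjective p := fun m => ⟨Finsupp.single m 1, by simp [p]⟩
    have hI := injective_hom_of_flat (R := R) (M →₀ R) I
    have hI' : Injective (ModuleCat.of R ((M →₀ R) →ₗ[R] I)) :=
      (Module.injective_iff_injective_object _ _).1 hI
    obtain ⟨δ, h1, -, h3⟩ := exists_les (p.lcomp R I) ((LinearMap.ker p).subtype.lcomp R I)
      (LinearMap.lcomp_injective_of_surjective p hp)
      (exact_lcomp_ker p hp I)
      (fun g => hom_extend I _ (Submodule.subtype_injective _) g) S
    refine subsingleton_of_forall_eq 0 fun e => ?_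
    obtain ⟨x, rfl⟩ := h1 0 (subsingleton_of_forall_eq 0 Abelian.Ext.eq_zero_of_injective) e
    obtain ⟨x, rfl⟩ := (Abelian.Ext.mk₀_bijective _ _).2 x
    refine (h3 x.hom).2 ?_
    obtain ⟨h, hh⟩ := hom_extend I ((LinearMap.ker p).subtype.lTensor S)
      (Module.Flat.lTensor_preserves_injective_linearMap _ (Submodule.subtype_injective _))
      (TensorProduct.lift x.hom)
    refine ⟨TensorProduct.curry h, ?_⟩
    ext s y
    simpa using LinearMap.congr_fun hh (s ⊗ₜ y)
  | succ n ih =>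
    intro M _ _
    let p : (M →₀ R) →ₗ[R] M := Finsupp.linearCombination R id
    have hp : Function.Surjective p := fun m => ⟨Finsupp.single m 1, by simp [p]⟩
    have hI := injective_hom_of_flat (R := R) (M →₀ R) I
    have hI' : Injective (ModuleCat.of R ((M →₀ R) →ₗ[R] I)) :=
      (Module.injective_iff_injective_object _ _).1 hI
    obtain ⟨δ, h1, -, h3⟩ := exists_les (p.lcomp R I) ((LinearMap.ker p).subtype.lcomp R I)
      (LinearMap.lcomp_injective_of_surjective p hp)
      (exact_lcomp_ker p hp I)
      (fun g => hom_extend I _ (Submodule.subtype_injective _) g) S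
    have := ih (LinearMap.ker p)
    exact (h1 (n + 1) (subsingleton_of_forall_eq 0
      Abelian.Ext.eq_zero_of_injective)).subsingleton

lemma main_ext (S M : Type u) [AddCommGroup S] [Module R S] [Module.Flat R S]
    [AddCommGroup M] [Module R M] (i : ℕ) :
    ∀ (N : Type u) [AddCommGroup N] [Module R N],
      (∀ n, Subsingleton (Abelian.Ext.{u} (ModuleCat.of R M) (ModuleCat.of R N) (n + 1))) →
      Nonempty (Abelian.Ext.{u} (ModuleCat.of R (S ⊗[R] M)) (ModuleCat.of R N) i ≃ₗ[R]
        Abelian.Ext.{u} (ModuleCat.of R S) (ModuleCat.of R (M →ₗ[R] N)) i) := by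
  let key (N : Type u) [AddCommGroup N] [Module R N] :
      Abelian.Ext.{u} (ModuleCat.of R (S ⊗[R] M)) (ModuleCat.of R N) 0 ≃ₗ[R]
        Abelian.Ext.{u} (ModuleCat.of R S) (ModuleCat.of R (M →ₗ[R] N)) 0 := 
    Abelian.Ext.linearEquiv₀ ≪≫ₗ ModuleCat.homLinearEquiv (S := R) ≪≫ₗ
      (TensorProduct.lift.equiv (.id R) S M N).symm ≪≫ₗ
      (ModuleCat.homLinearEquiv (S := R) (M := ModuleCat.of R S)
        (N := ModuleCat.of R (M →ₗ[R] N))).symm ≪≫ₗ Abelian.Ext.linearEquiv₀.symm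
  induction i with
  | zero => exact fun N _ _ _ => ⟨key N⟩
  | succ i ih =>
    intro N _ _ hN
    let J : ModuleCat.{u} R := Injective.under (ModuleCat.of R N)
    have hJ : Module.Injective R J :=
      (Module.injective_iff_injective_object _ _).2 (inferInstanceAs (Injective J))
    let f : N →ₗ[R] J := (Injective.ι (ModuleCat.of R N)).hom
    have hf : Function.Injective f := (ModuleCat.mono_iff_injective _).1 inferInstance
    let C := J ⧸ LinearMap.range f
    let g : J →ₗ[R] C := (LinearMap.range f).mkQ
    have hfg : Function.Exact f g := LinearMap.exact_map_mkQ_range f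
    have hg : Function.Surjective g := Submodule.mkQ_surjective _
    have hz (X : Type u) [AddCommGroup X] [Module R X] (n : ℕ) :
        Subsingleton (Abelian.Ext.{u} (ModuleCat.of R X) (ModuleCat.of R J) (n + 1)) := 
      have : Injective (ModuleCat.of R J) := inferInstanceAs (Injective J)
      subsingleton_of_forall_eq 0 Abelian.Ext.eq_zero_of_injective
    obtain ⟨δM, a1, a2, a3⟩ := exists_les f g hf hfg hg M
    obtain ⟨δT, b1, b2, b3⟩ := exists_les f g hf hfg hg (S ⊗[R] M)
    have hs : Function.Surjective (g.compRight R : (M →ₗ[R] J) →ₗ[R] _) := by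
      intro φ
      exact (a3 φ).1 ((hN 0).elim _ _)
    obtain ⟨δS, c1, c2, c3⟩ := exists_les (f.compRight R : (M →ₗ[R] N) →ₗ[R] _)
      (g.compRight R : (M →ₗ[R] J) →ₗ[R] _)
      (fun a b h => by
        ext m
        exact hf (LinearMap.congr_fun h m))
      (fun φ => by
        constructor
        · intro h
          have hr : ∀ m, φ m ∈ LinearMap.range f := fun m => by
            have := LinearMap.congr_fun h m
            exact (hfg _).1 this
          refine ⟨(LinearEquiv.ofInjective f hf).symm.toLinearMap ∘ₗ φ.codRestrict _ hr, ?_⟩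
          ext m
          simp only [LinearMap.compRight_apply, LinearMap.comp_apply, LinearEquiv.coe_coe]
          exact congrArg Subtype.val ((LinearEquiv.ofInjective f hf).apply_symm_apply _)
        · rintro ⟨ψ, rfl⟩
          ext m
          exact hfg.apply_apply_eq_zero _) hs S
    have hz' (n : ℕ) := ext_hom_injective (R := R) S J n M
    have hC (n : ℕ) :
        Subsingleton (Abelian.Ext.{u} (ModuleCat.of R M) (ModuleCat.of R C) (n + 1)) :=
      (a2 (n + 1) (hz M n)).subsingleton
    cases i with
    | zero =>
      refine linearEquiv_of_surj (δT 0) (δS 0 ∘ₗ (key C).toLinearMap) (b1 0 (hz _ 0))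
        ((c1 0 (hz' 0)).comp (key C).surjective) ?_
      intro x
      obtain ⟨x, rfl⟩ := (Abelian.Ext.mk₀_bijective _ _).2 x
      have hk : key C (Abelian.Ext.mk₀ x) =
          Abelian.Ext.mk₀ (ModuleCat.ofHom (TensorProduct.curry x.hom)) := by
        have : Abelian.Ext.linearEquiv₀ (R := R) (Abelian.Ext.mk₀ x) = x :=
          (Abelian.Ext.linearEquiv₀ (R := R)).apply_symm_apply x
        simp only [key, LinearEquiv.trans_apply, this]
        rfl
      refine (b3 x.hom).trans ?_
      rw [LinearMap.comp_apply, LinearEquiv.coe_coe, hk, c3]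
      constructor
      · rintro ⟨ψ, h⟩
        refine ⟨TensorProduct.curry ψ, ?_⟩
        ext s m
        exact LinearMap.congr_fun h (s ⊗ₜ m)
      · rintro ⟨ψ, h⟩
        refine ⟨TensorProduct.lift ψ, ?_⟩
        ext s m
        exact LinearMap.congr_fun (LinearMap.congr_fun h s) m
    | succ i =>
      obtain ⟨e⟩ := ih C hC
      exact ⟨(LinearEquiv.ofBijective (δT (i + 1)) ⟨b2 _ (hz _ _), b1 _ (hz _ _)⟩).symm ≪≫ₗ e ≪≫ₗ
        LinearEquiv.ofBijective (δS (i + 1)) ⟨c2 _ (hz' _), c1 _ (hz' _)⟩⟩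
end

/-- Let `φ : R → S` be a homomorphism of commutative Noetherian rings making `S` a flat
`R`-module, and let `M`, `N` be `R`-modules with `M` finitely generated. If
`Ext^i_R(M, N) = 0` for all `i ≥ 1`, then for every `i ≥ 0` there is an isomorphism of
`R`-modules `Ext^i_R(S ⊗_R M, N) ≅ Ext^i_R(S, Hom_R(M, N))`. -/
theorem ext_baseChange_iso_ext_hom
    (R S : Type u) [CommRing R] [CommRing S] [IsNoetherianRing R] [IsNoetherianRing S]
    [Algebra R S] [Module.Flat R S]
    (M N : Type u) [AddCommGroup M] [Module R M] [Module.Finite R M]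
    [AddCommGroup N] [Module R N]
    (h : ∀ i : ℕ, 1 ≤ i → Subsingleton (extModule R M N i)) :
    ∀ i : ℕ, Nonempty (extModule R (S ⊗[R] M) N i ≅ extModule R S (M →ₗ[R] N) i) := by
  intro i
  obtain ⟨e1⟩ := compare (R := R) (S ⊗[R] M) N i
  obtain ⟨e2⟩ := compare (R := R) S (M →ₗ[R] N) i
  obtain ⟨e⟩ := main_ext (R := R) S M i N (fun n => by
    obtain ⟨e⟩ := compare (R := R) M N (n + 1)
    have := h (n + 1) (by omega)
    exact e.symm.injective.subsingleton)
  exact ⟨(e1 ≪≫ₗ e ≪≫ₗ e2.symm).toModuleIso⟩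
end
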